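/- arXiv:1901.09912 — 3 statements merged into one kernel-verified Lean document; each statement's English description precedes it below -/
import Mathlib

section
/- Let F_c^{(α)} be the weighted finite Fourier transform operator defined by (F_c^{(α)} f)(x) = ∫_{-1}^{1} e^{icxy} f(y) (1-y²)^α dy on L²([-1,1], (1-y²)^α dy), with c > 0 and α ≥ 0. Let P̃_k denote the L²(ω_α)-normalized Jacobi polynomial of degree k with both parameters α. Then for all k ≥ 1, ‖F_c^{(α)} P̃_k‖_{L²(I,ω_α)} ≤ (π √Γ(α+1) / (√c · k^{(α+1)/2})) · (ce/(2k+1))^{k+1/2}. -/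
open Real MeasureTheory intervalIntegral

/-! Write `ω_α(x) = (1 - x²)^α`. A polynomial of degree `k` orthogonal in `L²(ω_α)` to all
polynomials of lower degree is a multiple of the polynomial `J` of the Rodrigues formula
`(ω_{α+k})^(k) = (-1)^k ω_α J`. Integrating by parts `k` times therefore replaces `e^{icxy}` by its
`k`-th derivative in `y`, which has modulus `|cx|^k`, and `ω_α` by `ω_{α+k}`. The same integration
by parts computes `‖J‖²`, so `|F_c P̃_k(x)|` is bounded pointwise, and integrating `x^{2k} ω_α`
leaves a quotient of Beta functions and a rising factorial. Log-convexity of `Γ` reduces the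
quotient to `Γ(k + 3/2)²`, and the Stirling lower bound for `k!` finishes the proof. -/

open Polynomial ProbabilityTheory
open scoped Nat

section GammaInequalities

lemma map_add_add_map_le_of_convexOn {s : Set ℝ} {f : ℝ → ℝ} (hf : ConvexOn ℝ s f) {x y t : ℝ}
    (hx : x ∈ s) (hyt : y + t ∈ s) (hxy : x ≤ y) (ht : 0 ≤ t) :
    f (x + t) + f y ≤ f x + f (y + t) := by
  rcases ht.eq_or_lt with rfl | ht
  · simp
  have hd : 0 < y - x + t := by linarith
  have ha : 0 ≤ (y - x) / (y - x + t) := div_nonneg (by linarith) hd.le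
  have hb : 0 ≤ t / (y - x + t) := by positivity
  have hab : (y - x) / (y - x + t) + t / (y - x + t) = 1 := by field_simp
  have hxt := hf.2 hx hyt ha hb hab
  have hy := hf.2 hx hyt hb ha (by rwa [add_comm])
  simp only [smul_eq_mul] at hxt hy
  rw [show (y - x) / (y - x + t) * x + t / (y - x + t) * (y + t) = x + t by
    field_simp; ring] at hxt
  rw [show t / (y - x + t) * x + (y - x) / (y - x + t) * (y + t) = y by field_simp; ring] at hy
  linear_combination hxt + hy + (f x + f (y + t)) * hab

lemma Gamma_add_mul_Gamma_le {x y t : ℝ} (hx : 0 < x) (hxy : x ≤ y) (ht : 0 ≤ t) :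
    Gamma (x + t) * Gamma y ≤ Gamma x * Gamma (y + t) := by
  have hy : 0 < y := hx.trans_le hxy
  have hΓx := Gamma_pos_of_pos hx
  have hΓy := Gamma_pos_of_pos hy
  have hΓxt := Gamma_pos_of_pos (add_pos_of_pos_of_nonneg hx ht)
  have hΓyt := Gamma_pos_of_pos (add_pos_of_pos_of_nonneg hy ht)
  rw [← log_le_log_iff (by positivity) (by positivity), log_mul hΓxt.ne' hΓy.ne',
    log_mul hΓx.ne' hΓyt.ne']
  exact map_add_add_map_le_of_convexOn convexOn_log_Gamma hx (add_pos_of_pos_of_nonneg hy ht) hxy ht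

lemma rpow_mul_Gamma_add_one_le {x t : ℝ} (hx : 0 < x) (ht : 0 ≤ t) :
    x ^ t * Gamma (x + 1) ≤ Gamma (x + 1 + t) := by
  rcases ht.eq_or_lt with rfl | ht
  · simp
  have hΓx := Gamma_pos_of_pos hx
  have hΓx1 := Gamma_pos_of_pos (by linarith : 0 < x + 1)
  have hΓxt := Gamma_pos_of_pos (by linarith : 0 < x + 1 + t)
  have hslope := convexOn_log_Gamma.slope_mono_adjacent (x := x) (y := x + 1) (z := x + 1 + t)
    hx (add_pos (add_pos hx one_pos) ht) (by linarith) (by linarith)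
  simp only [Function.comp_apply, add_sub_cancel_left, div_one] at hslope
  have hlog : log (Gamma (x + 1)) = log x + log (Gamma x) := by
    rw [Gamma_add_one hx.ne', log_mul hx.ne' hΓx.ne']
  rw [le_div_iff₀ ht] at hslope
  rw [← log_le_log_iff (by positivity) hΓxt, log_mul (by positivity) hΓx1.ne', log_rpow hx]
  linear_combination hslope - t * hlog

lemma Gamma_nat_add_half_mul_factorial (k : ℕ) :
    Gamma (k + 1 / 2) * k ! = (2 * k)! * √π / 4 ^ k := by
  have hdup := Gamma_mul_Gamma_add_half ((k : ℝ) + 1 / 2)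
  have hpow : (2 : ℝ) ^ (1 - 2 * ((k : ℝ) + 1 / 2)) = (4 ^ k)⁻¹ := by
    rw [show 1 - 2 * ((k : ℝ) + 1 / 2) = -(2 * k : ℕ) by push_cast; ring, rpow_neg zero_le_two,
      rpow_natCast, pow_mul]
    norm_num
  rw [add_assoc, add_halves, Gamma_nat_eq_factorial, hpow,
    show 2 * ((k : ℝ) + 1 / 2) = (2 * k : ℕ) + 1 by push_cast; ring,
    Gamma_nat_eq_factorial] at hdup
  rw [hdup]
  ring

lemma add_half_mul_factorial_sq_le_Gamma_sq (k : ℕ) :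
    (k + 1 / 2) * (k ! : ℝ) ^ 2 ≤ Gamma (k + 3 / 2) ^ 2 := by
  have hconv := Gamma_add_mul_Gamma_le (x := (k : ℝ) + 1 / 2) (y := k + 1) (t := 1 / 2)
    (by positivity) (by linarith) (by norm_num)
  have hrec : Gamma ((k : ℝ) + 3 / 2) = (k + 1 / 2) * Gamma (k + 1 / 2) := by
    rw [← Gamma_add_one (by positivity)]
    ring_nf
  rw [add_assoc, add_halves, add_assoc (k : ℝ) 1, show (1 : ℝ) + 1 / 2 = 3 / 2 by norm_num,
    Gamma_nat_eq_factorial] at hconv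
  calc ((k : ℝ) + 1 / 2) * (k ! : ℝ) ^ 2
      = (k + 1 / 2) * (k ! * k !) := by ring
    _ ≤ (k + 1 / 2) * (Gamma (k + 1 / 2) * Gamma (k + 3 / 2)) := by gcongr
    _ = Gamma (k + 3 / 2) ^ 2 := by rw [hrec]; ring

lemma add_one_pow_le_exp_one_mul_pow (n : ℕ) : ((n : ℝ) + 1) ^ n ≤ exp 1 * n ^ n := by
  rcases n.eq_zero_or_pos with rfl | hn
  · simp
  calc ((n : ℝ) + 1) ^ n = (1 + (n : ℝ)⁻¹) ^ n * n ^ n := by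
        rw [← mul_pow]
        field_simp
    _ ≤ exp 1 * n ^ n := by
        gcongr
        exact one_add_inv_pow_le_exp

lemma mul_two_mul_add_one_pow_le_Gamma_sq (k : ℕ) :
    k * (2 * (k : ℝ) + 1) ^ (2 * k + 1) ≤
      π * exp 1 ^ (2 * k + 1) * 4 ^ k * Gamma (k + 3 / 2) ^ 2 := by
  have hStirling : 2 * π * k * (k / exp 1) ^ (2 * k) ≤ (k ! : ℝ) ^ 2 := by
    have := pow_le_pow_left₀ (by positivity) (Stirling.le_factorial_stirling k) 2
    rwa [mul_pow, sq_sqrt (by positivity), ← pow_mul, mul_comm k 2] at this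
  have hexp := add_one_pow_le_exp_one_mul_pow (2 * k)
  push_cast at hexp
  have hπ : 1 ≤ π ^ 2 := one_le_pow₀ (by linarith [pi_gt_three])
  calc k * (2 * (k : ℝ) + 1) ^ (2 * k + 1)
      = k * (2 * k + 1) * (2 * (k : ℝ) + 1) ^ (2 * k) := by ring
    _ ≤ k * (2 * k + 1) * (exp 1 * (2 * k) ^ (2 * k)) := by gcongr
    _ ≤ π ^ 2 * (k * (2 * k + 1) * (exp 1 * (2 * k) ^ (2 * k))) :=
        le_mul_of_one_le_left (by positivity) hπ
    _ = π * exp 1 ^ (2 * k + 1) * 4 ^ k *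
          ((k + 1 / 2) * (2 * π * k * (k / exp 1) ^ (2 * k))) := by
        rw [div_pow, mul_pow, pow_mul 2, pow_succ (exp 1),
          show (2 : ℝ) ^ 2 = 4 by norm_num]
        field_simp
    _ ≤ π * exp 1 ^ (2 * k + 1) * 4 ^ k * Gamma (k + 3 / 2) ^ 2 := by
        gcongr
        exact (mul_le_mul_of_nonneg_left hStirling (by positivity)).trans
          (add_half_mul_factorial_sq_le_Gamma_sq k)

end GammaInequalities

section BetaIntegrals

lemma integral_rpow_mul_one_sub_rpow {s t : ℝ} (hs : 0 < s) (ht : 0 < t) :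
    ∫ u in (0 : ℝ)..1, u ^ (s - 1) * (1 - u) ^ (t - 1) = beta s t := by
  rw [beta_eq_betaIntegralReal s t hs ht,
    ← Complex.ofReal_re (∫ u in (0 : ℝ)..1, u ^ (s - 1) * (1 - u) ^ (t - 1)),
    ← intervalIntegral.integral_ofReal, Complex.betaIntegral]
  congr 1
  refine intervalIntegral.integral_congr fun u hu => ?_
  rw [Set.uIcc_of_le zero_le_one] at hu
  simp [Complex.ofReal_cpow hu.1, Complex.ofReal_cpow (sub_nonneg.2 hu.2)]

lemma integral_abs_mul_comp_sq (g : ℝ → ℝ) :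
    ∫ x : ℝ, |x| * g (x ^ 2) = ∫ u in Set.Ioi 0, g u := by
  calc ∫ x : ℝ, |x| * g (x ^ 2) = ∫ x : ℝ, |x| * g (|x| ^ 2) := by simp only [sq_abs]
    _ = 2 * ∫ x in Set.Ioi (0 : ℝ), x * g (x ^ 2) := integral_comp_abs (f := fun x => x * g (x ^ 2))
    _ = ∫ x in Set.Ioi (0 : ℝ), (2 * x ^ ((2 : ℝ) - 1)) • g (x ^ (2 : ℝ)) := by
        rw [← MeasureTheory.integral_const_mul]
        refine integral_congr_ae (.of_forall fun x => ?_)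
        norm_num [mul_assoc]
    _ = ∫ u in Set.Ioi 0, g u := integral_comp_rpow_Ioi_of_pos two_pos

lemma integral_pow_mul_one_sub_sq_rpow {α : ℝ} (hα : -1 < α) (k : ℕ) :
    ∫ x in (-1 : ℝ)..1, x ^ (2 * k) * (1 - x ^ 2) ^ α = beta (k + 1 / 2) (α + 1) := by
  let g : ℝ → ℝ := (Set.Ioo 0 1).indicator fun u => u ^ ((k : ℝ) - 1 / 2) * (1 - u) ^ α
  have hpow {x : ℝ} (hx : x ≠ 0) : |x| * (x ^ 2) ^ ((k : ℝ) - 1 / 2) = x ^ (2 * k) := by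
    rw [rpow_sub (by positivity), ← sqrt_eq_rpow, sqrt_sq_eq_abs, rpow_natCast, ← pow_mul]
    field_simp
  have hg : (Set.Ioo (-1) 1).indicator (fun x : ℝ => x ^ (2 * k) * (1 - x ^ 2) ^ α) =ᵐ[volume]
      fun x => |x| * g (x ^ 2) := by
    filter_upwards [Measure.ae_ne volume (0 : ℝ)] with x hx
    have hmem : x ∈ Set.Ioo (-1) 1 ↔ x ^ 2 ∈ Set.Ioo (0 : ℝ) 1 := by
      rw [Set.mem_Ioo, Set.mem_Ioo, ← abs_lt, sq_lt_one_iff_abs_lt_one]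
      exact (and_iff_right (by positivity)).symm
    by_cases hx1 : x ∈ Set.Ioo (-1) 1
    · rw [Set.indicator_of_mem hx1, show g (x ^ 2) = _ from Set.indicator_of_mem (hmem.1 hx1) _,
        ← mul_assoc, hpow hx]
    · rw [Set.indicator_of_notMem hx1,
        show g (x ^ 2) = 0 from Set.indicator_of_notMem (hmem.not.1 hx1) _, mul_zero]
  calc ∫ x in (-1 : ℝ)..1, x ^ (2 * k) * (1 - x ^ 2) ^ α
      = ∫ x : ℝ, |x| * g (x ^ 2) := by
        rw [intervalIntegral.integral_of_le (by norm_num), integral_Ioc_eq_integral_Ioo,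
          ← MeasureTheory.integral_indicator measurableSet_Ioo, integral_congr_ae hg]
    _ = ∫ u in Set.Ioi 0, g u := integral_abs_mul_comp_sq g
    _ = ∫ u in (0 : ℝ)..1, u ^ ((k : ℝ) + 1 / 2 - 1) * (1 - u) ^ (α + 1 - 1) := by
        rw [setIntegral_indicator measurableSet_Ioo,
          Set.inter_eq_right.2 Set.Ioo_subset_Ioi_self, ← integral_Ioc_eq_integral_Ioo,
          ← intervalIntegral.integral_of_le zero_le_one]
        ring_nf
    _ = beta (k + 1 / 2) (α + 1) := integral_rpow_mul_one_sub_rpow (by positivity) (by linarith)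

lemma integral_one_sub_sq_rpow {α : ℝ} (hα : -1 < α) :
    ∫ x in (-1 : ℝ)..1, (1 - x ^ 2) ^ α = beta (1 / 2) (α + 1) := by
  simpa using integral_pow_mul_one_sub_sq_rpow hα 0

lemma intervalIntegrable_one_sub_sq_rpow {α : ℝ} (hα : -1 < α) :
    IntervalIntegrable (fun x : ℝ => (1 - x ^ 2) ^ α) volume (-1) 1 :=
  intervalIntegrable_of_integral_ne_zero <| by
    rw [integral_one_sub_sq_rpow hα]
    exact (beta_pos one_half_pos (by linarith)).ne'

lemma one_sub_sq_rpow_nonneg (α : ℝ) {x : ℝ} (hx : x ∈ Set.Icc (-1 : ℝ) 1) :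
    0 ≤ (1 - x ^ 2) ^ α :=
  rpow_nonneg (by nlinarith [hx.1, hx.2]) α

end BetaIntegrals

section GegenbauerPolynomials

/-- The operator raising the degree and lowering the parameter of Gegenbauer polynomials:
`((1 - x²)^(α+1) R)' = -(1 - x²)^α Q` for `Q = gegenbauerRaise α R`. -/
noncomputable def gegenbauerRaise (α : ℝ) (R : ℝ[X]) : ℝ[X] :=
  C (2 * (α + 1)) * (X * R) - (1 - X ^ 2) * derivative R

/-- The polynomial `J` of the Rodrigues formula `((1 - x²)^(α+k))^(k) = (-1)^k (1 - x²)^α J`, a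
multiple of the Jacobi polynomial `P_k^{(α,α)}`. Iterating `gegenbauerRaise` keeps the definition
polynomial, with no higher derivatives of real powers. -/
noncomputable def gegenbauerRodrigues : ℕ → ℝ → ℝ[X]
  | 0, _ => 1
  | k + 1, α => gegenbauerRaise α (gegenbauerRodrigues k (α + 1))

/-- `P` is a scalar multiple, possibly zero, of the Jacobi polynomial `P_k^{(α,α)}`, encoded by
orthogonality in `L²([-1, 1], (1 - x²)^α dx)` to all polynomials of degree less than `k`. -/
structure IsGegenbauer (α : ℝ) (k : ℕ) (P : ℝ[X]) : Prop where
  natDegree_le : P.natDegree ≤ k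
  integral_mul_eq_zero (Q : ℝ[X]) (hQ : Q.degree < k) :
    ∫ x in (-1 : ℝ)..1, P.eval x * Q.eval x * (1 - x ^ 2) ^ α = 0

lemma coeff_succ_gegenbauerRaise (α : ℝ) (R : ℝ[X]) (n : ℕ) :
    (gegenbauerRaise α R).coeff (n + 1) =
      (2 * α + n + 2) * R.coeff n - (n + 2) * R.coeff (n + 2) := by
  rw [gegenbauerRaise, sub_mul, one_mul, pow_two, mul_assoc]
  rcases n with _ | n <;>
    simp only [coeff_sub, coeff_C_mul, coeff_X_mul, coeff_X_mul_zero, coeff_derivative] <;>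
    push_cast <;> ring

lemma natDegree_gegenbauerRaise_le (α : ℝ) {R : ℝ[X]} {k : ℕ} (hR : R.natDegree ≤ k) :
    (gegenbauerRaise α R).natDegree ≤ k + 1 := by
  rw [natDegree_le_iff_coeff_eq_zero] at hR ⊢
  rintro (_ | n) hn
  · omega
  · rw [coeff_succ_gegenbauerRaise, hR n (by omega), hR (n + 2) (by omega)]
    ring

lemma natDegree_gegenbauerRodrigues_le (k : ℕ) (α : ℝ) :
    (gegenbauerRodrigues k α).natDegree ≤ k := by
  induction k generalizing α with
  | zero => simp [gegenbauerRodrigues]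
  | succ k ih => exact natDegree_gegenbauerRaise_le α (ih _)

lemma coeff_gegenbauerRodrigues (k : ℕ) (α : ℝ) :
    (gegenbauerRodrigues k α).coeff k = (ascPochhammer ℝ k).eval (2 * α + k + 1) := by
  induction k generalizing α with
  | zero => simp [gegenbauerRodrigues]
  | succ k ih =>
    rw [gegenbauerRodrigues, coeff_succ_gegenbauerRaise, ih,
      coeff_eq_zero_of_natDegree_lt
        ((natDegree_gegenbauerRodrigues_le k (α + 1)).trans_lt (by omega)),
      ascPochhammer_succ_left]
    simp only [mul_zero, sub_zero, Nat.cast_add, Nat.cast_one, eval_mul, eval_X, eval_comp,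
      eval_add, eval_one]
    ring_nf

lemma ascPochhammer_eval_two_mul_add_pos {α : ℝ} (hα : -1 < α) (k : ℕ) :
    0 < (ascPochhammer ℝ k).eval (2 * α + k + 1) := by
  rcases k with _ | k
  · simp
  · refine ascPochhammer_pos _ _ ?_
    push_cast
    linarith [k.cast_nonneg (α := ℝ)]

variable {α : ℝ} {k : ℕ}

lemma hasDerivAt_eval_mul_one_sub_sq_rpow (α : ℝ) (R : ℝ[X]) {x : ℝ}
    (hx : x ∈ Set.Ioo (-1 : ℝ) 1) :
    HasDerivAt (fun x => R.eval x * (1 - x ^ 2) ^ (α + 1))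
      (-((gegenbauerRaise α R).eval x * (1 - x ^ 2) ^ α)) x := by
  have hpos : 0 < 1 - x ^ 2 := by nlinarith [hx.1, hx.2]
  refine ((R.hasDerivAt x).mul (((hasDerivAt_pow 2 x).const_sub 1).rpow_const
    (p := α + 1) (Or.inl hpos.ne'))).congr_deriv ?_
  simp only [gegenbauerRaise, rpow_add_one hpos.ne', add_sub_cancel_right, Nat.cast_ofNat,
    Nat.add_one_sub_one, pow_one, eval_sub, eval_mul, eval_C, eval_one, eval_X, eval_pow]
  ring

lemma intervalIntegrable_eval_mul_one_sub_sq_rpow (hα : -1 < α) (Q : ℝ[X]) :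
    IntervalIntegrable (fun x : ℝ => Q.eval x * (1 - x ^ 2) ^ α) volume (-1) 1 :=
  (intervalIntegrable_one_sub_sq_rpow hα).continuousOn_mul Q.continuous.continuousOn

lemma eq_zero_of_integral_sq_mul_one_sub_sq_rpow (hα : -1 < α) {R : ℝ[X]}
    (hR : ∫ x in (-1 : ℝ)..1, R.eval x ^ 2 * (1 - x ^ 2) ^ α = 0) : R = 0 := by
  have hnonneg : 0 ≤ᵐ[volume.restrict (Set.Ioc (-1 : ℝ) 1)]
      fun x => R.eval x ^ 2 * (1 - x ^ 2) ^ α :=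
    (ae_restrict_mem measurableSet_Ioc).mono fun x hx =>
      mul_nonneg (sq_nonneg _) (one_sub_sq_rpow_nonneg α (Set.Ioc_subset_Icc_self hx))
  have hint : IntervalIntegrable (fun x : ℝ => R.eval x ^ 2 * (1 - x ^ 2) ^ α) volume (-1) 1 :=
    (intervalIntegrable_one_sub_sq_rpow hα).continuousOn_mul (R.continuous.pow 2).continuousOn
  have hzero := (intervalIntegral.integral_eq_zero_iff_of_le_of_nonneg_ae (by norm_num)
    hnonneg hint).1 hR
  have hae : (R.eval ·) =ᵐ[volume.restrict (Set.Ioo (-1 : ℝ) 1)] 0 := by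
    filter_upwards [ae_restrict_of_ae_restrict_of_subset Set.Ioo_subset_Ioc_self hzero,
      ae_restrict_mem measurableSet_Ioo] with x hx hmem
    have hpos : 0 < 1 - x ^ 2 := by nlinarith [hmem.1, hmem.2]
    simpa [(rpow_pos_of_pos hpos α).ne'] using hx
  have hroots := Measure.eqOn_open_of_ae_eq hae isOpen_Ioo R.continuous.continuousOn
    continuousOn_const
  exact eq_zero_of_infinite_isRoot R ((Set.Ioo_infinite (by norm_num)).mono hroots)

section IntegrationByParts

variable {E : Type*} [NormedAddCommGroup E] [NormedSpace ℝ E] [CompleteSpace E]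

lemma integral_gegenbauerRaise_smul (hα : -1 < α) (R : ℝ[X]) {f : ℝ → E} (hf : ContDiff ℝ 1 f) :
    ∫ x in (-1 : ℝ)..1, ((gegenbauerRaise α R).eval x * (1 - x ^ 2) ^ α) • f x =
      ∫ x in (-1 : ℝ)..1, (R.eval x * (1 - x ^ 2) ^ (α + 1)) • deriv f x := by
  have hα1 : 0 < α + 1 := by linarith
  have hcont : Continuous fun x => R.eval x * (1 - x ^ 2) ^ (α + 1) :=
    R.continuous.mul ((by fun_prop : Continuous fun x : ℝ => 1 - x ^ 2).rpow_const
      fun _ => Or.inr hα1.le)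
  rw [intervalIntegral.integral_smul_deriv_eq_deriv_smul_of_hasDerivAt hcont.continuousOn
    hf.continuous.continuousOn
    (fun x hx => hasDerivAt_eval_mul_one_sub_sq_rpow α R (by simpa using hx))
    (fun x _ => (hf.differentiable one_ne_zero x).hasDerivAt)
    (intervalIntegrable_eval_mul_one_sub_sq_rpow hα _).neg
    ((hf.continuous_deriv le_rfl).intervalIntegrable _ _)]
  simp [zero_rpow hα1.ne']

lemma integral_gegenbauerRodrigues_smul (hα : -1 < α) {f : ℝ → E} (hf : ContDiff ℝ k f) :
    ∫ x in (-1 : ℝ)..1, ((gegenbauerRodrigues k α).eval x * (1 - x ^ 2) ^ α) • f x =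
      ∫ x in (-1 : ℝ)..1, (1 - x ^ 2) ^ (α + k) • iteratedDeriv k f x := by
  induction k generalizing α f with
  | zero => simp [gegenbauerRodrigues]
  | succ k ih =>
    have hderiv : ContDiff ℝ k (deriv f) := by
      push_cast at hf
      exact (contDiff_succ_iff_deriv.1 hf).2.2
    rw [gegenbauerRodrigues, integral_gegenbauerRaise_smul hα _ (hf.of_le (by simp)),
      ih (by linarith) hderiv, iteratedDeriv_succ', add_assoc α, ← Nat.cast_one_add, add_comm 1 k]

end IntegrationByParts

lemma iteratedDeriv_eval (Q : ℝ[X]) (n : ℕ) :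
    iteratedDeriv n (Q.eval ·) = ((derivative^[n] Q).eval ·) := by
  induction n generalizing Q with
  | zero => simp
  | succ n ih =>
    rw [iteratedDeriv_succ', Function.iterate_succ_apply, ← ih]
    congr 1
    exact funext fun x => Q.deriv

lemma integral_gegenbauerRodrigues_mul_eval (hα : -1 < α) {Q : ℝ[X]} (hQ : Q.natDegree ≤ k) :
    ∫ x in (-1 : ℝ)..1, (gegenbauerRodrigues k α).eval x * Q.eval x * (1 - x ^ 2) ^ α =
      k ! * Q.coeff k * beta (1 / 2) (α + k + 1) := by
  have hconst : derivative^[k] Q = C (k ! * Q.coeff k) := by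
    rw [eq_C_of_natDegree_le_zero ((natDegree_iterate_derivative Q k).trans (by omega)),
      coeff_iterate_derivative]
    simp [Nat.descFactorial_self]
  have hα' : -1 < α + k := by linarith [k.cast_nonneg (α := ℝ)]
  calc ∫ x in (-1 : ℝ)..1, (gegenbauerRodrigues k α).eval x * Q.eval x * (1 - x ^ 2) ^ α
      = ∫ x in (-1 : ℝ)..1, ((gegenbauerRodrigues k α).eval x * (1 - x ^ 2) ^ α) • Q.eval x :=
        intervalIntegral.integral_congr fun x _ => by simp only [smul_eq_mul]; ring
    _ = ∫ x in (-1 : ℝ)..1, (1 - x ^ 2) ^ (α + k) * (k ! * Q.coeff k) := by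
        rw [integral_gegenbauerRodrigues_smul hα (by simpa using Q.contDiff_aeval (𝕜 := ℝ) k),
          iteratedDeriv_eval, hconst]
        simp only [eval_C, smul_eq_mul]
    _ = k ! * Q.coeff k * beta (1 / 2) (α + k + 1) := by
        rw [intervalIntegral.integral_mul_const, integral_one_sub_sq_rpow hα', mul_comm]

lemma isGegenbauer_gegenbauerRodrigues (hα : -1 < α) (k : ℕ) :
    IsGegenbauer α k (gegenbauerRodrigues k α) where
  natDegree_le := natDegree_gegenbauerRodrigues_le k α
  integral_mul_eq_zero Q hQ := by
    rw [integral_gegenbauerRodrigues_mul_eval hα (natDegree_le_of_degree_le hQ.le),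
      coeff_eq_zero_of_degree_lt hQ]
    simp

lemma integral_gegenbauerRodrigues_sq (hα : -1 < α) (k : ℕ) :
    ∫ x in (-1 : ℝ)..1, (gegenbauerRodrigues k α).eval x ^ 2 * (1 - x ^ 2) ^ α =
      k ! * (ascPochhammer ℝ k).eval (2 * α + k + 1) * beta (1 / 2) (α + k + 1) := by
  simp only [sq ((gegenbauerRodrigues k α).eval _)]
  rw [integral_gegenbauerRodrigues_mul_eval hα (natDegree_gegenbauerRodrigues_le k α),
    coeff_gegenbauerRodrigues]

namespace IsGegenbauer

variable {P : ℝ[X]}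

lemma eq_zero_of_degree_lt (hP : IsGegenbauer α k P) (hα : -1 < α) (hdeg : P.degree < k) :
    P = 0 :=
  eq_zero_of_integral_sq_mul_one_sub_sq_rpow hα <| by
    simpa only [sq] using hP.integral_mul_eq_zero P hdeg

lemma sub_C_mul {Q : ℝ[X]} (hP : IsGegenbauer α k P) (hQ : IsGegenbauer α k Q) (hα : -1 < α)
    (a : ℝ) : IsGegenbauer α k (P - C a * Q) where
  natDegree_le := by
    simpa only [max_self] using natDegree_sub_le_of_le hP.natDegree_le
      ((natDegree_C_mul_le a Q).trans hQ.natDegree_le)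
  integral_mul_eq_zero R hR := by
    have hint (A : ℝ[X]) := intervalIntegrable_eval_mul_one_sub_sq_rpow hα (A * R)
    simp only [eval_mul] at hint
    calc ∫ x in (-1 : ℝ)..1, (P - C a * Q).eval x * R.eval x * (1 - x ^ 2) ^ α
        = ∫ x in (-1 : ℝ)..1, (P.eval x * R.eval x * (1 - x ^ 2) ^ α -
            a * (Q.eval x * R.eval x * (1 - x ^ 2) ^ α)) :=
          intervalIntegral.integral_congr fun x _ => by
            simp only [eval_sub, eval_mul, eval_C]; ring
      _ = 0 := by
          rw [intervalIntegral.integral_sub (hint P) ((hint Q).const_mul a),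
            intervalIntegral.integral_const_mul, hP.integral_mul_eq_zero R hR,
            hQ.integral_mul_eq_zero R hR, mul_zero, sub_zero]

lemma exists_eq_C_mul_gegenbauerRodrigues (hP : IsGegenbauer α k P) (hα : -1 < α) :
    ∃ a : ℝ, P = C a * gegenbauerRodrigues k α := by
  have hcoeff : (gegenbauerRodrigues k α).coeff k ≠ 0 := by
    rw [coeff_gegenbauerRodrigues]
    exact (ascPochhammer_eval_two_mul_add_pos hα k).ne'
  let a := P.coeff k / (gegenbauerRodrigues k α).coeff k
  have hsub := hP.sub_C_mul (isGegenbauer_gegenbauerRodrigues hα k) hα a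
  refine ⟨a, sub_eq_zero.1 (hsub.eq_zero_of_degree_lt hα ?_)⟩
  refine (degree_le_of_natDegree_le hsub.natDegree_le).lt_of_ne fun hdeg => ?_
  refine coeff_ne_zero_of_eq_degree hdeg ?_
  simp [a, div_mul_cancel₀ _ hcoeff]

lemma of_natDegree_lt (hdeg : P.natDegree ≤ k)
    (horth : ∀ Q : ℝ[X], Q.natDegree < k →
      ∫ x in (-1 : ℝ)..1, P.eval x * Q.eval x * (1 - x ^ 2) ^ α = 0) : IsGegenbauer α k P where
  natDegree_le := hdeg
  integral_mul_eq_zero Q hQ := by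
    rcases eq_or_ne Q 0 with rfl | hQ0
    · simp
    · exact horth Q ((natDegree_lt_iff_degree_lt hQ0).2 hQ)

lemma norm_integral_smul_sq_le {E : Type*} [NormedAddCommGroup E] [NormedSpace ℝ E]
    [CompleteSpace E] (hP : IsGegenbauer α k P) (hα : -1 < α) {f : ℝ → E} (hf : ContDiff ℝ k f)
    {M : ℝ} (hM : ∀ x ∈ Set.Icc (-1 : ℝ) 1, ‖iteratedDeriv k f x‖ ≤ M) :
    ‖∫ x in (-1 : ℝ)..1, (P.eval x * (1 - x ^ 2) ^ α) • f x‖ ^ 2 ≤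
      beta (1 / 2) (α + k + 1) / (k ! * (ascPochhammer ℝ k).eval (2 * α + k + 1)) * M ^ 2 *
        ∫ x in (-1 : ℝ)..1, P.eval x ^ 2 * (1 - x ^ 2) ^ α := by
  obtain ⟨a, rfl⟩ := hP.exists_eq_C_mul_gegenbauerRodrigues hα
  have hα' : -1 < α + k := by linarith [k.cast_nonneg (α := ℝ)]
  have hpoch := ascPochhammer_eval_two_mul_add_pos hα k
  have hbound : ‖∫ x in (-1 : ℝ)..1, (1 - x ^ 2) ^ (α + k) • iteratedDeriv k f x‖ ≤
      beta (1 / 2) (α + k + 1) * M := by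
    rw [← integral_one_sub_sq_rpow hα', ← intervalIntegral.integral_mul_const]
    refine intervalIntegral.norm_integral_le_of_norm_le (by norm_num)
      (.of_forall fun x hx => ?_) ((intervalIntegrable_one_sub_sq_rpow hα').mul_const M)
    have hx' := Set.Ioc_subset_Icc_self hx
    have hw := one_sub_sq_rpow_nonneg (α + k) hx'
    rw [norm_smul, Real.norm_of_nonneg hw]
    exact mul_le_mul_of_nonneg_left (hM x hx') hw
  simp only [eval_mul, eval_C, mul_assoc a, mul_smul a, mul_pow a, mul_assoc (a ^ 2)]
  rw [intervalIntegral.integral_smul, integral_gegenbauerRodrigues_smul hα hf,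
    intervalIntegral.integral_const_mul, integral_gegenbauerRodrigues_sq hα, norm_smul, mul_pow,
    Real.norm_eq_abs, sq_abs]
  calc a ^ 2 * ‖∫ x in (-1 : ℝ)..1, (1 - x ^ 2) ^ (α + k) • iteratedDeriv k f x‖ ^ 2
      ≤ a ^ 2 * (beta (1 / 2) (α + k + 1) * M) ^ 2 := by gcongr
    _ = _ := by field_simp

end IsGegenbauer

end GegenbauerPolynomials

section GegenbauerBetaProduct

lemma ascPochhammer_eval_le_of_le (n : ℕ) {x y : ℝ} (hx : 0 < x) (hxy : x ≤ y) :
    (ascPochhammer ℝ n).eval x ≤ (ascPochhammer ℝ n).eval y := by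
  induction n with
  | zero => simp
  | succ n ih =>
    rw [ascPochhammer_succ_eval, ascPochhammer_succ_eval]
    have hpos : 0 ≤ (ascPochhammer ℝ n).eval y := (ascPochhammer_pos n y (hx.trans_le hxy)).le
    gcongr

lemma factorial_two_mul_le_factorial_mul_ascPochhammer {α : ℝ} (hα : 0 ≤ α) (k : ℕ) :
    ((2 * k)! : ℝ) ≤ k ! * (ascPochhammer ℝ k).eval (2 * α + k + 1) := by
  rw [two_mul k, ← factorial_mul_ascPochhammer ℝ k k]
  gcongr
  exact ascPochhammer_eval_le_of_le k (by positivity) (by linarith)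

lemma beta_mul_beta_div_ascPochhammer_le {α : ℝ} (hα : 0 ≤ α) {k : ℕ} (hk : 0 < k) :
    beta (1 / 2) (α + k + 1) * beta (k + 1 / 2) (α + 1) /
        (k ! * (ascPochhammer ℝ k).eval (2 * α + k + 1)) ≤
      π * Gamma (α + 1) / (4 ^ k * k ^ α * Gamma (k + 3 / 2) ^ 2) := by
  have hΓk := Gamma_pos_of_pos (by linarith : 0 < (k : ℝ) + 3 / 2)
  have hΓsum := Gamma_pos_of_pos (by linarith : 0 < α + k + 3 / 2)
  have hratio : Gamma (α + k + 1) / Gamma (α + k + 3 / 2) ≤ k ! / Gamma (k + 3 / 2) := by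
    have h := Gamma_add_mul_Gamma_le (x := k + 1) (y := k + 3 / 2) (by linarith) (by linarith) hα
    rw [Gamma_nat_eq_factorial, add_right_comm, add_right_comm (k : ℝ) (3 / 2),
      add_comm (k : ℝ) α] at h
    exact (div_le_div_iff₀ hΓsum hΓk).2 h
  have hgrowth : k ^ α * Gamma (k + 3 / 2) ≤ Gamma (α + k + 3 / 2) := by
    have h := rpow_mul_Gamma_add_one_le (x := k + 1 / 2) (by linarith) hα
    rw [show (k : ℝ) + 1 / 2 + 1 = k + 3 / 2 by ring, add_right_comm, add_comm (k : ℝ) α] at h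
    refine le_trans ?_ h
    gcongr
    linarith
  have hfact := factorial_two_mul_le_factorial_mul_ascPochhammer hα k
  calc beta (1 / 2) (α + k + 1) * beta (k + 1 / 2) (α + 1) /
        (k ! * (ascPochhammer ℝ k).eval (2 * α + k + 1))
      = √π * Gamma (α + 1) * Gamma (k + 1 / 2) *
          (Gamma (α + k + 1) / Gamma (α + k + 3 / 2)) / Gamma (α + k + 3 / 2) /
          (k ! * (ascPochhammer ℝ k).eval (2 * α + k + 1)) := by
        rw [beta, beta, Gamma_one_half_eq, show 1 / 2 + (α + k + 1) = α + k + 3 / 2 by ring,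
          show (k : ℝ) + 1 / 2 + (α + 1) = α + k + 3 / 2 by ring]
        ring
    _ ≤ √π * Gamma (α + 1) * Gamma (k + 1 / 2) * (k ! / Gamma (k + 3 / 2)) /
          (k ^ α * Gamma (k + 3 / 2)) / (2 * k)! := by gcongr
    _ = √π * Gamma (α + 1) * (Gamma (k + 1 / 2) * k !) /
          (k ^ α * Gamma (k + 3 / 2) ^ 2 * (2 * k)!) := by field_simp
    _ = π * Gamma (α + 1) / (4 ^ k * k ^ α * Gamma (k + 3 / 2) ^ 2) := by
        rw [Gamma_nat_add_half_mul_factorial]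
        field_simp
        rw [sq_sqrt pi_pos.le]

end GegenbauerBetaProduct

section WeightedFourier

/-- The weighted finite Fourier transform `F_c^{(α)} f` on `[-1, 1]`, with weight `(1 - y²)^α`. -/
noncomputable def weightedFourier (c α : ℝ) (f : ℝ → ℂ) (x : ℝ) : ℂ :=
  ∫ y in (-1 : ℝ)..1, Complex.exp (Complex.I * (c * x * y)) * f y * (((1 - y ^ 2) ^ α : ℝ) : ℂ)

lemma iteratedDeriv_cexp_mul_ofReal (z : ℂ) (n : ℕ) :
    iteratedDeriv n (fun y : ℝ => Complex.exp (z * y)) =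
      fun y : ℝ => z ^ n * Complex.exp (z * y) := by
  induction n with
  | zero => simp
  | succ n ih =>
    rw [iteratedDeriv_succ, ih]
    funext y
    have hlin : HasDerivAt (fun y : ℝ => z * y) z y := by
      simpa using (Complex.ofRealCLM.hasDerivAt (x := y)).const_mul z
    rw [(hlin.cexp.const_mul (z ^ n)).deriv]
    ring

variable {α : ℝ} {k : ℕ} {P : ℝ[X]}

namespace IsGegenbauer

lemma norm_weightedFourier_sq_le (hP : IsGegenbauer α k P) (hα : -1 < α) (c x : ℝ) :
    ‖weightedFourier c α (fun y => ↑(P.eval y)) x‖ ^ 2 ≤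
      beta (1 / 2) (α + k + 1) / (k ! * (ascPochhammer ℝ k).eval (2 * α + k + 1)) *
        (c * x) ^ (2 * k) * ∫ y in (-1 : ℝ)..1, P.eval y ^ 2 * (1 - y ^ 2) ^ α := by
  let f : ℝ → ℂ := fun y => Complex.exp (Complex.I * (c * x) * y)
  have hderiv (y : ℝ) : ‖iteratedDeriv k f y‖ = |c * x| ^ k := by
    rw [iteratedDeriv_cexp_mul_ofReal, norm_mul, norm_pow, norm_mul, Complex.norm_exp]
    simp [← Complex.ofReal_mul]
  have hsmooth : ContDiff ℝ k f :=
    (contDiff_const.mul Complex.ofRealCLM.contDiff).cexp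
  have hF : weightedFourier c α (fun y => ↑(P.eval y)) x =
      ∫ y in (-1 : ℝ)..1, (P.eval y * (1 - y ^ 2) ^ α) • f y :=
    intervalIntegral.integral_congr fun y _ => by
      simp only [f, Complex.real_smul, Complex.ofReal_mul, mul_assoc]
      ring
  rw [hF, ← (even_two_mul k).pow_abs, mul_comm 2 k, pow_mul]
  exact hP.norm_integral_smul_sq_le hα hsmooth fun y _ => (hderiv y).le

lemma integral_norm_weightedFourier_sq_le (hP : IsGegenbauer α k P) (hα : -1 < α) (c : ℝ) :
    ∫ x in (-1 : ℝ)..1, ‖weightedFourier c α (fun y => ↑(P.eval y)) x‖ ^ 2 * (1 - x ^ 2) ^ α ≤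
      c ^ (2 * k) * (beta (1 / 2) (α + k + 1) * beta (k + 1 / 2) (α + 1) /
        (k ! * (ascPochhammer ℝ k).eval (2 * α + k + 1))) *
        ∫ y in (-1 : ℝ)..1, P.eval y ^ 2 * (1 - y ^ 2) ^ α := by
  set B := beta (1 / 2) (α + k + 1) / (k ! * (ascPochhammer ℝ k).eval (2 * α + k + 1))
  set N := ∫ y in (-1 : ℝ)..1, P.eval y ^ 2 * (1 - y ^ 2) ^ α
  have hint : IntervalIntegrable (fun x : ℝ => x ^ (2 * k) * (1 - x ^ 2) ^ α) volume (-1) 1 := by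
    simpa only [eval_pow, eval_X] using intervalIntegrable_eval_mul_one_sub_sq_rpow hα (X ^ (2 * k))
  calc ∫ x in (-1 : ℝ)..1, ‖weightedFourier c α (fun y => ↑(P.eval y)) x‖ ^ 2 * (1 - x ^ 2) ^ α
      ≤ ∫ x in (-1 : ℝ)..1, c ^ (2 * k) * B * N * (x ^ (2 * k) * (1 - x ^ 2) ^ α) := by
        refine (le_norm_self _).trans (intervalIntegral.norm_integral_le_of_norm_le (by norm_num)
          (.of_forall fun x hx => ?_) (hint.const_mul _))
        have hw := one_sub_sq_rpow_nonneg α (Set.Ioc_subset_Icc_self hx)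
        rw [Real.norm_of_nonneg (by positivity)]
        calc ‖weightedFourier c α (fun y => ↑(P.eval y)) x‖ ^ 2 * (1 - x ^ 2) ^ α
            ≤ B * (c * x) ^ (2 * k) * N * (1 - x ^ 2) ^ α :=
              mul_le_mul_of_nonneg_right (hP.norm_weightedFourier_sq_le hα c x) hw
          _ = c ^ (2 * k) * B * N * (x ^ (2 * k) * (1 - x ^ 2) ^ α) := by ring
    _ = c ^ (2 * k) * (beta (1 / 2) (α + k + 1) * beta (k + 1 / 2) (α + 1) /
          (k ! * (ascPochhammer ℝ k).eval (2 * α + k + 1))) * N := by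
        rw [intervalIntegral.integral_const_mul, integral_pow_mul_one_sub_sq_rpow hα]
        ring

end IsGegenbauer

end WeightedFourier

lemma pow_mul_pi_mul_Gamma_div_le_sq {c α : ℝ} (hc : 0 < c) (hα : 0 ≤ α) {k : ℕ} (hk : 0 < k) :
    c ^ (2 * k) * (π * Gamma (α + 1) / (4 ^ k * k ^ α * Gamma (k + 3 / 2) ^ 2)) ≤
      (π * √(Gamma (α + 1)) / (√c * (k : ℝ) ^ ((α + 1) / 2)) *
        (c * exp 1 / (2 * (k : ℝ) + 1)) ^ ((k : ℝ) + 1 / 2)) ^ 2 := by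
  have hk' : (0 : ℝ) < k := by exact_mod_cast hk
  have hΓα := Gamma_pos_of_pos (by linarith : 0 < α + 1)
  have hkpow : ((k : ℝ) ^ ((α + 1) / 2)) ^ 2 = k ^ α * k := by
    rw [← rpow_natCast, ← rpow_mul hk'.le, Nat.cast_two, div_mul_cancel₀ _ two_ne_zero,
      rpow_add_one hk'.ne']
  have hbase : ((c * exp 1 / (2 * (k : ℝ) + 1)) ^ ((k : ℝ) + 1 / 2)) ^ 2 =
      (c * exp 1 / (2 * k + 1)) ^ (2 * k + 1) := by
    rw [← rpow_natCast, ← rpow_mul (by positivity), ← rpow_natCast]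
    congr 1
    push_cast
    ring
  calc c ^ (2 * k) * (π * Gamma (α + 1) / (4 ^ k * k ^ α * Gamma (k + 3 / 2) ^ 2))
      = c ^ (2 * k) * π * Gamma (α + 1) / k ^ α / (4 ^ k * Gamma (k + 3 / 2) ^ 2) := by
        field_simp
    _ ≤ c ^ (2 * k) * π * Gamma (α + 1) / k ^ α *
          (π * exp 1 ^ (2 * k + 1) / (k * (2 * (k : ℝ) + 1) ^ (2 * k + 1))) := by
        rw [div_eq_mul_inv (_ / _)]
        gcongr
        rw [inv_eq_one_div, div_le_div_iff₀ (by positivity) (by positivity)]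
        linarith [mul_two_mul_add_one_pow_le_Gamma_sq k]
    _ = _ := by
        rw [mul_pow, hbase, div_pow, mul_pow, mul_pow, div_pow, mul_pow, hkpow, sq_sqrt hΓα.le,
          sq_sqrt hc.le, pow_succ c]
        field_simp

/-- Bound on the weighted `L²` norm of the weighted finite Fourier transform of the
normalized Jacobi polynomial `P̃_k = P̃_k^{(α,α)}`. The polynomial `P` is characterized (up to
sign, which does not affect the conclusion) by: degree `k`, orthogonality to all lower degree
polynomials in `L²([-1,1],(1-x²)^α dx)`, and unit norm in that space. Then
`‖F_c^{(α)} P̃_k‖_{L²(I,ω_α)} ≤ (π √Γ(α+1)/(√c k^{(α+1)/2})) (ce/(2k+1))^{k+1/2}`. -/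
theorem weighted_fourier_jacobi_bound (c α : ℝ) (hc : 0 < c) (hα : 0 ≤ α)
    (k : ℕ) (hk : 1 ≤ k) (P : Polynomial ℝ)
    (hdeg : P.natDegree = k)
    (horth : ∀ Q : Polynomial ℝ, Q.natDegree < k →
      (∫ x in (-1 : ℝ)..1, P.eval x * Q.eval x * (1 - x ^ 2) ^ α) = 0)
    (hnorm : (∫ x in (-1 : ℝ)..1, (P.eval x) ^ 2 * (1 - x ^ 2) ^ α) = 1) :
    Real.sqrt (∫ x in (-1 : ℝ)..1,
        ‖∫ y in (-1 : ℝ)..1,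
            Complex.exp (Complex.I * (c * x * y)) * (↑(P.eval y) : ℂ) *
              (((1 - y ^ 2) ^ α : ℝ) : ℂ)‖ ^ 2 * (1 - x ^ 2) ^ α)
      ≤ π * Real.sqrt (Real.Gamma (α + 1)) / (Real.sqrt c * (k : ℝ) ^ ((α + 1) / 2)) *
        (c * Real.exp 1 / (2 * (k : ℝ) + 1)) ^ ((k : ℝ) + 1/2) := by
  have hP : IsGegenbauer α k P := .of_natDegree_lt hdeg.le horth
  refine Real.sqrt_le_iff.2 ⟨by positivity, ?_⟩
  calc ∫ x in (-1 : ℝ)..1, ‖weightedFourier c α (fun y => ↑(P.eval y)) x‖ ^ 2 * (1 - x ^ 2) ^ α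
      ≤ c ^ (2 * k) * (beta (1 / 2) (α + k + 1) * beta (k + 1 / 2) (α + 1) /
          (k ! * (ascPochhammer ℝ k).eval (2 * α + k + 1))) := by
        simpa only [hnorm, mul_one] using hP.integral_norm_weightedFourier_sq_le (by linarith) c
    _ ≤ c ^ (2 * k) * (π * Gamma (α + 1) / (4 ^ k * k ^ α * Gamma (k + 3 / 2) ^ 2)) :=
        mul_le_mul_of_nonneg_left (beta_mul_beta_div_ascPochhammer_le hα hk) (by positivity)
    _ ≤ _ := pow_mul_pi_mul_Gamma_div_le_sq hc hα hk
end

section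
/- Let c > 0 and α ≥ 0, and let λ_n^{(α)}(c) = (c/(2π)) |μ_n^{(α)}(c)|² denote the eigenvalues of the operator Q_c^{(α)} = (c/(2π)) (F_c^{(α)})* F_c^{(α)}. Then for every integer n > (ec+1)/2, λ_n^{(α)}(c) ≤ (K_α / (c^{α+1} log²((2n-1)/(ec)))) · (ec/(2n-1))^{2n+α}, with K_α = (π/2)(2/e)^{α+2} Γ(α+1). -/
open Real MeasureTheory intervalIntegral

/-!
Among the combinations of the first `n + 1` eigenfunctions, one has a transform `F` vanishing at
the `n` zeros of the Chebyshev polynomial `T_n`. On `[-1, 1]` the interpolation error formula then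
bounds `|F|` by `sup |F⁽ⁿ⁾| / (n! 2ⁿ⁻¹)`, and by Cauchy–Schwarz `|F⁽ⁿ⁾|` is at most `cⁿ` times the
`L²` norm of the combination times the square root of the moment `∫ y²ⁿ (1 - y²)^α dy`. As every
eigenvalue involved has modulus at least `|μ_n|`, this bounds `|μ_n|`. The moment is a Beta
integral, at most `Γ(α+1) (n - 1/2)^{-(α+1)}` because `1 - t ≤ e^{-t}`, and `n!` is bounded below
by Stirling's formula. With `s = ec/(2n-1)` the outcome is of order `s^{2n+α+2}`, and the logarithm
enters only through `s |log s| ≤ 1`.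
-/

section Interpolation

open Polynomial

theorem exists_iteratedDeriv_eq_zero_of_lt_card {n : ℕ} {f : ℝ → ℝ} (hf : ContDiff ℝ n f)
    {s : Set ℝ} [s.OrdConnected] {S : Finset ℝ} (hSs : ↑S ⊆ s) (hS : n < S.card)
    (hfS : ∀ x ∈ S, f x = 0) : ∃ ξ ∈ s, iteratedDeriv n f ξ = 0 := by
  induction n generalizing f S with
  | zero =>
    obtain ⟨x, hx⟩ := Finset.card_pos.mp hS
    exact ⟨x, hSs hx, by simpa using hfS x hx⟩
  | succ n ih =>
    obtain ⟨T, hTS, hT⟩ := Finset.exists_subset_card_eq (Nat.succ_le_of_lt hS)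
    let e := T.orderEmbOfFin hT
    have he (i) : e i ∈ S := hTS (T.orderEmbOfFin_mem hT i)
    have rolle (i : Fin (n + 1)) : ∃ z ∈ Set.Ioo (e i.castSucc) (e i.succ), deriv f z = 0 :=
      exists_deriv_eq_zero (e.strictMono i.castSucc_lt_succ) hf.continuous.continuousOn
        (by rw [hfS _ (he _), hfS _ (he _)])
    choose z hz hfz using rolle
    have hz_mono : StrictMono z := Fin.strictMono_iff_lt_succ.mpr fun i =>
      (hz i.castSucc).2.trans (hz i.succ).1
    have hzs (i) : z i ∈ s :=
      Set.Icc_subset s (hSs (he _)) (hSs (he _)) (Set.Ioo_subset_Icc_self (hz i))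
    have hf' : ContDiff ℝ n (deriv f) := (contDiff_succ_iff_deriv.mp (by exact_mod_cast hf)).2.2
    rw [iteratedDeriv_succ']
    exact ih hf' (S := Finset.univ.image z) (by simpa [Set.range_subset_iff] using hzs)
      (by simp [Finset.card_image_of_injective _ hz_mono.injective]) (by simpa using hfz)

theorem iteratedDeriv_polynomial_eval {𝕜 : Type*} [NontriviallyNormedField 𝕜] (n : ℕ) (p : 𝕜[X])
    (x : 𝕜) :
    iteratedDeriv n (fun y => p.eval y) x = (derivative^[n] p).eval x := by
  induction n generalizing p with
  | zero => simp
  | succ n ih =>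
    rw [iteratedDeriv_succ', Function.iterate_succ_apply, ← ih]
    congr 1
    ext y
    exact p.deriv

theorem iterate_derivative_natDegree_of_monic {R : Type*} [Semiring R] {p : R[X]} (hp : p.Monic) :
    derivative^[p.natDegree] p = C (p.natDegree.factorial : R) := by
  have hdeg : (derivative^[p.natDegree] p).natDegree = 0 := by
    simpa using natDegree_iterate_derivative p p.natDegree
  rw [eq_C_of_natDegree_eq_zero hdeg, coeff_iterate_derivative, zero_add, hp.coeff_natDegree,
    Nat.descFactorial_self, nsmul_one]

/-- The remainder at `x` is found by applying the generalized Rolle theorem to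
`f - (f x / p x) p`, where `p` is the nodal polynomial of `S`. -/
theorem exists_eq_iteratedDeriv_div_factorial_mul_prod {f : ℝ → ℝ} {S : Finset ℝ}
    (hf : ContDiff ℝ S.card f) {s : Set ℝ} [s.OrdConnected] (hSs : ↑S ⊆ s)
    (hfS : ∀ t ∈ S, f t = 0) {x : ℝ} (hx : x ∈ s) :
    ∃ ξ ∈ s, f x = iteratedDeriv S.card f ξ / S.card.factorial * ∏ t ∈ S, (x - t) := by
  by_cases hxS : x ∈ S
  · exact ⟨x, hx, by rw [hfS x hxS, Finset.prod_eq_zero hxS (sub_self x), mul_zero]⟩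
  let p : ℝ[X] := Lagrange.nodal S id
  have hp_eval (y : ℝ) : p.eval y = ∏ t ∈ S, (y - t) := Lagrange.eval_nodal
  have hp_deriv : derivative^[S.card] p = C (S.card.factorial : ℝ) := by
    simpa [p] using iterate_derivative_natDegree_of_monic (Lagrange.nodal_monic (s := S) (v := id))
  have hpx : p.eval x ≠ 0 := by
    rw [hp_eval, Finset.prod_ne_zero_iff]
    exact fun t ht => sub_ne_zero.mpr fun h => hxS (h ▸ ht)
  set a := f x / p.eval x with ha
  have hap : ContDiff ℝ S.card fun y => a * p.eval y :=
    contDiff_const.mul (by simpa using p.contDiff_aeval (𝕜 := ℝ) S.card)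
  obtain ⟨ξ, hξs, hξ⟩ := exists_iteratedDeriv_eq_zero_of_lt_card (n := S.card)
    (f := f - fun y => a * p.eval y) (hf.sub hap) (S := insert x S)
    (by simpa [Set.insert_subset_iff] using ⟨hx, hSs⟩) (by simp [hxS])
    (by
      refine Finset.forall_mem_insert .. |>.mpr ⟨by simp [ha, hpx], fun t ht => ?_⟩
      simp [hfS t ht, p, Lagrange.eval_nodal, Finset.prod_eq_zero ht])
  rw [iteratedDeriv_sub hf.contDiffAt hap.contDiffAt, iteratedDeriv_const_mul_field,
    iteratedDeriv_polynomial_eval, hp_deriv, eval_C, sub_eq_zero] at hξ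
  refine ⟨ξ, hξs, ?_⟩
  rw [hξ, mul_div_cancel_right₀ _ (by positivity), ← hp_eval, ha, div_mul_cancel₀ _ hpx]

/-- The zeros of the Chebyshev polynomial `T_n`, whose nodal polynomial has the smallest sup norm on
`[-1, 1]` among `n`-point sets. -/
noncomputable def chebyshevNodes (n : ℕ) : Finset ℝ :=
  (Chebyshev.T ℝ n).roots.toFinset

theorem chebyshevNodes_val (n : ℕ) : (chebyshevNodes n).val = (Chebyshev.T ℝ n).roots := by
  rw [chebyshevNodes, Chebyshev.roots_T_real, Finset.val_toFinset]

theorem card_chebyshevNodes (n : ℕ) : (chebyshevNodes n).card = n := by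
  rw [Finset.card_def, chebyshevNodes_val, Chebyshev.roots_T_real, Finset.card_val,
    Finset.card_image_of_injOn, Finset.card_range]
  exact (Finset.range n).nodup_map_iff_injOn.mp (Chebyshev.roots_T_real_nodup n)

theorem chebyshevNodes_subset_Icc (n : ℕ) : ↑(chebyshevNodes n) ⊆ Set.Icc (-1 : ℝ) 1 := by
  intro x hx
  rw [Finset.mem_coe, ← Finset.mem_val, chebyshevNodes_val, Chebyshev.roots_T_real,
    Finset.mem_val, Finset.mem_image] at hx
  obtain ⟨k, -, rfl⟩ := hx
  exact cos_mem_Icc _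

theorem two_pow_mul_prod_chebyshevNodes (n : ℕ) (x : ℝ) :
    2 ^ (n - 1) * ∏ t ∈ chebyshevNodes n, (x - t) = (Chebyshev.T ℝ n).eval x := by
  have hcard : (Chebyshev.T ℝ n).roots.card = (Chebyshev.T ℝ n).natDegree := by
    rw [← chebyshevNodes_val, Finset.card_val, card_chebyshevNodes, Chebyshev.natDegree_T,
      Int.natAbs_natCast]
  rw [← C_leadingCoeff_mul_prod_multiset_X_sub_C hcard, ← chebyshevNodes_val]
  simp [eval_prod]

theorem abs_prod_chebyshevNodes_le (n : ℕ) {x : ℝ} (hx : x ∈ Set.Icc (-1 : ℝ) 1) :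
    |∏ t ∈ chebyshevNodes n, (x - t)| ≤ (2 ^ (n - 1))⁻¹ := by
  have hT := Chebyshev.abs_eval_T_real_le_one n (abs_le.mpr hx)
  rw [← two_pow_mul_prod_chebyshevNodes, abs_mul, abs_of_pos (by positivity)] at hT
  exact (le_inv_mul_iff₀ (by positivity)).mpr hT |>.trans_eq (mul_one _)

theorem norm_le_of_eq_zero_on_chebyshevNodes {F : Type*} [NormedAddCommGroup F] [NormedSpace ℝ F]
    {n : ℕ} {f : ℝ → F} (hf : ContDiff ℝ n f) (hf0 : ∀ t ∈ chebyshevNodes n, f t = 0)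
    {M : ℝ} (hM : ∀ x ∈ Set.Icc (-1 : ℝ) 1, ‖iteratedDeriv n f x‖ ≤ M)
    {x : ℝ} (hx : x ∈ Set.Icc (-1 : ℝ) 1) : ‖f x‖ ≤ M / (n.factorial * 2 ^ (n - 1)) := by
  obtain ⟨g, hg, hgx⟩ := exists_dual_vector'' ℝ (f x)
  have hgf_deriv : iteratedDeriv n (g ∘ f) = g ∘ iteratedDeriv n f := by
    ext y
    simp [iteratedDeriv_eq_iteratedFDeriv, g.iteratedFDeriv_comp_left hf.contDiffAt le_rfl]
  obtain ⟨ξ, hξ, hremainder⟩ := exists_eq_iteratedDeriv_div_factorial_mul_prod (f := g ∘ f)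
    (S := chebyshevNodes n) (by rw [card_chebyshevNodes]; exact g.contDiff.comp hf)
    (chebyshevNodes_subset_Icc n) (fun t ht => by simp [hf0 t ht]) hx
  have hgξ : |g (iteratedDeriv n f ξ)| ≤ M :=
    (g.le_of_opNorm_le hg _).trans ((one_mul _).trans_le (hM ξ hξ))
  have hM0 : 0 ≤ M := (abs_nonneg _).trans hgξ
  rw [card_chebyshevNodes, hgf_deriv] at hremainder
  calc ‖f x‖ = |g (f x)| := by rw [hgx]; simp
    _ = |g (iteratedDeriv n f ξ)| / n.factorial * |∏ t ∈ chebyshevNodes n, (x - t)| := by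
      rw [← Function.comp_apply (f := g) (g := f), hremainder, abs_mul, abs_div, Nat.abs_cast,
        Function.comp_apply]
    _ ≤ M / n.factorial * (2 ^ (n - 1))⁻¹ := by
      gcongr
      exact abs_prod_chebyshevNodes_le n hx
    _ = M / (n.factorial * 2 ^ (n - 1)) := by rw [div_mul_eq_div_div, div_eq_mul_inv _ (2 ^ _)]

end Interpolation

section OrthonormalEigenvectors

variable {𝕜 E ι : Type*} [RCLike 𝕜] [NormedAddCommGroup E] [InnerProductSpace 𝕜 E]
  {e : ι → E} {T : E →ₗ[𝕜] E} {μ : ι → 𝕜} {m : ℝ}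

theorem norm_sum_smul_sq_of_orthonormal [Fintype ι] (he : Orthonormal 𝕜 e) (a : ι → 𝕜) :
    ‖∑ i, a i • e i‖ ^ 2 = ∑ i, ‖a i‖ ^ 2 := by
  simpa using he.orthogonalFamily.norm_sum a Finset.univ

theorem norm_smul_le_norm_map_of_orthonormal_eigenvectors [Finite ι] (he : Orthonormal 𝕜 e)
    (hT : ∀ i, T (e i) = μ i • e i) (hm0 : 0 ≤ m) (hm : ∀ i, m ≤ ‖μ i‖) {φ : E}
    (hφ : φ ∈ Submodule.span 𝕜 (Set.range e)) : m * ‖φ‖ ≤ ‖T φ‖ := by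
  have := Fintype.ofFinite ι
  obtain ⟨a, rfl⟩ := (Submodule.mem_span_range_iff_exists_fun 𝕜).mp hφ
  have hTa : T (∑ i, a i • e i) = ∑ i, (a i * μ i) • e i := by
    simp only [map_sum, map_smul, hT, smul_smul]
  refine le_of_sq_le_sq ?_ (norm_nonneg _)
  rw [mul_pow, hTa, norm_sum_smul_sq_of_orthonormal he,
    norm_sum_smul_sq_of_orthonormal he, Finset.mul_sum]
  refine Finset.sum_le_sum fun i _ => ?_
  rw [norm_mul, mul_pow, mul_comm]
  gcongr
  exact hm i

theorem le_of_orthonormal_eigenvectors_of_finrank_lt [Fintype ι] {W : Type*} [AddCommGroup W]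
    [Module 𝕜 W] [FiniteDimensional 𝕜 W] (he : Orthonormal 𝕜 e)
    (hT : ∀ i, T (e i) = μ i • e i) (hm0 : 0 ≤ m) (hm : ∀ i, m ≤ ‖μ i‖) (L : E →ₗ[𝕜] W)
    (hW : Module.finrank 𝕜 W < Fintype.card ι) {B : ℝ}
    (hB : ∀ φ, L φ = 0 → ‖T φ‖ ≤ B * ‖φ‖) : m ≤ B := by
  let V := Submodule.span 𝕜 (Set.range e)
  have : FiniteDimensional 𝕜 V := .span_of_finite 𝕜 (Set.finite_range e)
  have hV : Module.finrank 𝕜 V = Fintype.card ι := finrank_span_eq_card he.linearIndependent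
  obtain ⟨φ, hLφ, hφ0⟩ := (Submodule.ne_bot_iff _).mp
    (LinearMap.ker_ne_bot_of_finrank_lt (f := L.domRestrict V) (hW.trans_eq hV.symm))
  have hle := (norm_smul_le_norm_map_of_orthonormal_eigenvectors he hT hm0 hm φ.2).trans
    (hB φ hLφ)
  exact le_of_mul_le_mul_right hle (norm_pos_iff.mpr (by simpa using hφ0))

end OrthonormalEigenvectors

section CauchySchwarz

variable {X E F : Type*} [MeasurableSpace X] {ν : Measure X} [NormedAddCommGroup E]

theorem norm_sq_eq_integral_norm_sq [InnerProductSpace ℂ E] (φ : Lp E 2 ν) :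
    ‖φ‖ ^ 2 = ∫ x, ‖φ x‖ ^ 2 ∂ν := by
  have h := L2.inner_def (𝕜 := ℂ) φ φ
  simp only [inner_self_eq_norm_sq_to_K] at h
  exact_mod_cast h

theorem integral_norm_mul_norm_le [NormedAddCommGroup F] [InnerProductSpace ℂ F] {f : X → E}
    (hf : MemLp f 2 ν) (φ : Lp F 2 ν) :
    ∫ x, ‖f x‖ * ‖φ x‖ ∂ν ≤ √(∫ x, ‖f x‖ ^ 2 ∂ν) * ‖φ‖ := by
  have h := integral_mul_norm_le_Lp_mul_Lq (μ := ν) (f := fun x => ‖f x‖) (g := fun x => ‖φ x‖)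
    Real.HolderConjugate.two_two (by simpa using hf.norm) (by simpa using (Lp.memLp φ).norm)
  simpa only [rpow_two, norm_norm, ← sqrt_eq_rpow, sqrt_sq (norm_nonneg _),
    ← norm_sq_eq_integral_norm_sq] using h

end CauchySchwarz

section FiniteFourier

open Complex (I)
open scoped FourierTransform

/-- The Fourier integral `x ↦ ∫ e^{icxy} φ(y) dν(y)` of bandwidth `c` attached to a measure `ν`;
for the weight `(1 - y²)^α` on `[-1, 1]` this is the operator `F_c^{(α)}`. -/
noncomputable def finiteFourier (c : ℝ) (ν : Measure ℝ) (φ : ℝ → ℂ) (x : ℝ) : ℂ :=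
  ∫ y, Complex.exp (I * (c * x * y)) * φ y ∂ν

/-- The bilinear form `(y, x) ↦ -(c / 2π) x y` that turns the normalization `e^{-2πi⟨y, x⟩}` of
`VectorFourier.fourierIntegral` into the kernel `e^{icxy}`. -/
noncomputable def bandwidthForm (c : ℝ) : ℝ →L[ℝ] ℝ →L[ℝ] ℝ :=
  -(c / (2 * π)) • ContinuousLinearMap.mul ℝ ℝ

variable {c : ℝ} {ν : Measure ℝ} {φ : ℝ → ℂ} {n : ℕ}

set_option maxSynthPendingDepth 3 in
theorem two_pi_mul_norm_bandwidthForm (c : ℝ) : 2 * π * ‖bandwidthForm c‖ = |c| := by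
  rw [bandwidthForm, norm_smul, ContinuousLinearMap.opNorm_mul, mul_one, norm_neg, norm_div,
    norm_eq_abs, norm_of_nonneg two_pi_pos.le, mul_div_cancel₀ _ two_pi_pos.ne']

theorem finiteFourier_eq_fourierIntegral (c : ℝ) (ν : Measure ℝ) (φ : ℝ → ℂ) :
    finiteFourier c ν φ =
      VectorFourier.fourierIntegral 𝐞 ν (bandwidthForm c).toLinearMap₁₂ φ := by
  ext x
  refine integral_congr_ae (.of_forall fun y => ?_)
  simp only [Circle.smul_def, fourierChar_apply, smul_eq_mul, bandwidthForm]
  congr 2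
  simp only [map_smul, LinearMap.smul_apply, neg_smul, LinearMap.neg_apply,
    ContinuousLinearMap.toLinearMap₁₂_apply_apply_apply, ContinuousLinearMap.mul_apply',
    smul_eq_mul, neg_neg, Complex.ofReal_mul, Complex.ofReal_ofNat, Complex.ofReal_div]
  field_simp

theorem contDiff_finiteFourier (hφ : ∀ k ≤ n, Integrable (fun y => ‖y‖ ^ k * ‖φ y‖) ν) :
    ContDiff ℝ n (finiteFourier c ν φ) := by
  rw [finiteFourier_eq_fourierIntegral]
  exact VectorFourier.contDiff_fourierIntegral (N := n) _ fun k hk => hφ k (by exact_mod_cast hk)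

theorem norm_iteratedDeriv_finiteFourier_le
    (hφ : ∀ k ≤ n, Integrable (fun y => ‖y‖ ^ k * ‖φ y‖) ν) (hφm : AEStronglyMeasurable φ ν)
    (x : ℝ) : ‖iteratedDeriv n (finiteFourier c ν φ) x‖ ≤ |c| ^ n * ∫ y, ‖y ^ n‖ * ‖φ y‖ ∂ν := by
  rw [← norm_iteratedFDeriv_eq_norm_iteratedDeriv, finiteFourier_eq_fourierIntegral,
    VectorFourier.iteratedFDeriv_fourierIntegral (N := n) _
      (fun k hk => hφ k (by exact_mod_cast hk)) hφm le_rfl, ← MeasureTheory.integral_const_mul]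
  refine (VectorFourier.norm_fourierIntegral_le_integral_norm ..).trans
    (integral_mono_of_nonneg (.of_forall fun y => norm_nonneg _) ?_ (.of_forall fun y => ?_))
  · simpa only [norm_pow] using (hφ n le_rfl).const_mul (|c| ^ n)
  · have h := VectorFourier.norm_fourierPowSMulRight_le (bandwidthForm c) φ y n
    rwa [two_pi_mul_norm_bandwidthForm, mul_assoc, ← norm_pow] at h

theorem integrable_norm_pow_mul_norm (hν : ∀ᵐ y ∂ν, y ∈ Set.Icc (-1 : ℝ) 1) (hφ : Integrable φ ν)
    (k : ℕ) : Integrable (fun y => ‖y‖ ^ k * ‖φ y‖) ν := by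
  refine hφ.norm.bdd_mul (c := 1) (by fun_prop) (hν.mono fun y hy => ?_)
  rw [norm_pow, norm_norm]
  exact pow_le_one₀ (norm_nonneg y) (abs_le.mpr hy)

variable [IsFiniteMeasure ν]

theorem norm_finiteFourier_le_of_eq_zero_on_chebyshevNodes (hν : ∀ᵐ y ∂ν, y ∈ Set.Icc (-1 : ℝ) 1)
    (φ : Lp ℂ 2 ν) (hφ0 : ∀ t ∈ chebyshevNodes n, finiteFourier c ν φ t = 0) {x : ℝ}
    (hx : x ∈ Set.Icc (-1 : ℝ) 1) :
    ‖finiteFourier c ν φ x‖ ≤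
      |c| ^ n / (n.factorial * 2 ^ (n - 1)) * √(∫ y, y ^ (2 * n) ∂ν) * ‖φ‖ := by
  have hint k := integrable_norm_pow_mul_norm hν ((Lp.memLp φ).integrable one_le_two) k
  have hpow : MemLp (fun y => y ^ n) 2 ν :=
    .of_bound (by fun_prop) 1 (hν.mono fun y hy => by
      rw [norm_pow]; exact pow_le_one₀ (norm_nonneg y) (abs_le.mpr hy))
  have hbound (y : ℝ) (_ : y ∈ Set.Icc (-1 : ℝ) 1) :
      ‖iteratedDeriv n (finiteFourier c ν φ) y‖ ≤ |c| ^ n * (√(∫ y, y ^ (2 * n) ∂ν) * ‖φ‖) := by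
    refine (norm_iteratedDeriv_finiteFourier_le (fun k _ => hint k)
      (Lp.aestronglyMeasurable φ) y).trans ?_
    gcongr
    simpa [← pow_mul, mul_comm n 2, norm_eq_abs, (even_two_mul n).pow_abs] using
      integral_norm_mul_norm_le hpow φ
  calc ‖finiteFourier c ν φ x‖
    _ ≤ |c| ^ n * (√(∫ y, y ^ (2 * n) ∂ν) * ‖φ‖) / (n.factorial * 2 ^ (n - 1)) :=
      norm_le_of_eq_zero_on_chebyshevNodes (contDiff_finiteFourier fun k _ => hint k) hφ0 hbound hx
    _ = _ := by ring

/-- The Fourier integral on `L²(ν)`, as a linear map into functions on `ℝ`. -/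
noncomputable def finiteFourierₗ (c : ℝ) (ν : Measure ℝ) [IsFiniteMeasure ν] :
    Lp ℂ 2 ν →ₗ[ℂ] ℝ → ℂ where
  toFun φ := finiteFourier c ν φ
  map_add' φ ψ := by
    have hint (φ : Lp ℂ 2 ν) : Integrable φ ν := (Lp.memLp φ).integrable one_le_two
    simp only [finiteFourier_eq_fourierIntegral]
    rw [VectorFourier.fourierIntegral_congr_ae _ _ _ (Lp.coeFn_add φ ψ),
      VectorFourier.fourierIntegral_add continuous_fourierChar (by fun_prop) (hint φ) (hint ψ)]
  map_smul' a φ := by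
    simp only [finiteFourier_eq_fourierIntegral, RingHom.id_apply]
    rw [VectorFourier.fourierIntegral_congr_ae _ _ _ (Lp.coeFn_smul a φ),
      VectorFourier.fourierIntegral_const_smul]

theorem memLp_finiteFourier (φ : Lp ℂ 2 ν) : MemLp (finiteFourier c ν φ) 2 ν := by
  have hφ : Integrable φ ν := (Lp.memLp φ).integrable one_le_two
  have hcont : Continuous (finiteFourier c ν φ) := by
    rw [finiteFourier_eq_fourierIntegral]
    exact VectorFourier.fourierIntegral_continuous continuous_fourierChar (by fun_prop) hφ
  refine .of_bound hcont.aestronglyMeasurable (∫ y, ‖φ y‖ ∂ν) (.of_forall fun x => ?_)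
  rw [finiteFourier_eq_fourierIntegral]
  exact VectorFourier.norm_fourierIntegral_le_integral_norm ..

/-- The Fourier integral as an operator on `L²(ν)`: this is `F_c^{(α)}` when `ν` is the weight
`(1 - y²)^α` on `[-1, 1]`. -/
noncomputable def finiteFourierL2 (c : ℝ) (ν : Measure ℝ) [IsFiniteMeasure ν] :
    Lp ℂ 2 ν →ₗ[ℂ] Lp ℂ 2 ν where
  toFun φ := (memLp_finiteFourier (c := c) φ).toLp
  map_add' φ ψ := by
    rw [← MemLp.toLp_add]
    exact MemLp.toLp_congr _ _ (.of_eq (map_add (finiteFourierₗ c ν) φ ψ))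
  map_smul' a φ := by
    rw [RingHom.id_apply, ← MemLp.toLp_const_smul]
    exact MemLp.toLp_congr _ _ (.of_eq (map_smul (finiteFourierₗ c ν) a φ))

theorem norm_finiteFourierL2_le (hν : ∀ᵐ y ∂ν, y ∈ Set.Icc (-1 : ℝ) 1) (φ : Lp ℂ 2 ν) {B : ℝ}
    (hB0 : 0 ≤ B) (hB : ∀ x ∈ Set.Icc (-1 : ℝ) 1, ‖finiteFourier c ν φ x‖ ≤ B) :
    ‖finiteFourierL2 c ν φ‖ ≤ √(ν.real Set.univ) * B := by
  have h : ∀ᵐ x ∂ν, ‖finiteFourierL2 c ν φ x‖ ≤ B := by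
    filter_upwards [hν, (memLp_finiteFourier (c := c) φ).coeFn_toLp] with x hx hφx
    exact (congrArg norm hφx).trans_le (hB x hx)
  refine (Lp.norm_le_of_ae_bound hB0 h).trans_eq ?_
  simp [sqrt_eq_rpow, Measure.real, measureUnivNNReal, ENNReal.coe_toNNReal_eq_toReal]

theorem norm_eigenvalue_finiteFourierL2_le (hν : ∀ᵐ y ∂ν, y ∈ Set.Icc (-1 : ℝ) 1) {ι : Type*}
    [Fintype ι] (hn : n < Fintype.card ι) {e : ι → Lp ℂ 2 ν} (he : Orthonormal ℂ e) {μ : ι → ℂ}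
    (hμ : ∀ i, finiteFourierL2 c ν (e i) = μ i • e i) {m : ℝ} (hm0 : 0 ≤ m)
    (hm : ∀ i, m ≤ ‖μ i‖) :
    m ≤ √(ν.real Set.univ) *
      (|c| ^ n / (n.factorial * 2 ^ (n - 1)) * √(∫ y, y ^ (2 * n) ∂ν)) := by
  refine le_of_orthonormal_eigenvectors_of_finrank_lt he hμ hm0 hm
    (LinearMap.funLeft ℂ ℂ ((↑) : chebyshevNodes n → ℝ) ∘ₗ finiteFourierₗ c ν)
    (by simpa [card_chebyshevNodes] using hn) fun φ hφ => ?_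
  rw [mul_assoc]
  exact norm_finiteFourierL2_le hν φ (by positivity) fun x hx =>
    norm_finiteFourier_le_of_eq_zero_on_chebyshevNodes hν φ
      (fun t ht => congrFun hφ ⟨t, ht⟩) hx

end FiniteFourier

section GegenbauerWeight

/-- The weight `(1 - y²)^α dy` on `[-1, 1]`, for which the Gegenbauer polynomials are orthogonal.
The interval is taken half-open to agree with interval integrals over `-1..1`. -/
noncomputable def gegenbauerMeasure (α : ℝ) : Measure ℝ :=
  (volume.restrict (Set.Ioc (-1) 1)).withDensity fun y => ENNReal.ofReal ((1 - y ^ 2) ^ α)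

variable {α : ℝ}

theorem one_sub_sq_nonneg_of_mem_Icc {y : ℝ} (hy : y ∈ Set.Icc (-1 : ℝ) 1) : 0 ≤ 1 - y ^ 2 :=
  sub_nonneg.mpr ((sq_le_one_iff_abs_le_one y).mpr (abs_le.mpr hy))

theorem ae_gegenbauerMeasure_mem_Icc (α : ℝ) :
    ∀ᵐ y ∂gegenbauerMeasure α, y ∈ Set.Icc (-1 : ℝ) 1 :=
  (withDensity_absolutelyContinuous _ _).ae_le
    ((ae_restrict_mem measurableSet_Ioc).mono fun _ => Set.mem_Icc_of_Ioc)

theorem integral_gegenbauerMeasure {E : Type*} [NormedAddCommGroup E] [NormedSpace ℝ E] (α : ℝ)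
    (f : ℝ → E) :
    ∫ y, f y ∂gegenbauerMeasure α = ∫ y in (-1 : ℝ)..1, (1 - y ^ 2) ^ α • f y := by
  rw [gegenbauerMeasure, integral_withDensity_eq_integral_toReal_smul (by fun_prop) (by simp),
    integral_of_le (by norm_num)]
  refine setIntegral_congr_fun measurableSet_Ioc fun y hy => ?_
  simp only [ENNReal.toReal_ofReal
    (rpow_nonneg (one_sub_sq_nonneg_of_mem_Icc (Set.mem_Icc_of_Ioc hy)) α)]

theorem gegenbauerMeasure_univ_le (hα : 0 ≤ α) : gegenbauerMeasure α Set.univ ≤ 2 := by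
  have hweight : ∀ᵐ y ∂volume.restrict (Set.Ioc (-1 : ℝ) 1),
      ENNReal.ofReal ((1 - y ^ 2) ^ α) ≤ 1 := by
    filter_upwards [ae_restrict_mem measurableSet_Ioc] with y hy
    exact ENNReal.ofReal_le_one.mpr (rpow_le_one
      (one_sub_sq_nonneg_of_mem_Icc (Set.mem_Icc_of_Ioc hy)) (sub_le_self 1 (sq_nonneg y)) hα)
  refine (withDensity_mono hweight Set.univ).trans_eq ?_
  rw [withDensity_const, one_smul, Measure.restrict_apply_univ, volume_Ioc]
  norm_num

theorem isFiniteMeasure_gegenbauerMeasure (hα : 0 ≤ α) : IsFiniteMeasure (gegenbauerMeasure α) :=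
  ⟨(gegenbauerMeasure_univ_le hα).trans_lt (by simp)⟩

theorem memLp_gegenbauerMeasure_of_continuous {E : Type*} [NormedAddCommGroup E] (hα : 0 ≤ α)
    {f : ℝ → E} (hf : Continuous f) (p : ENNReal) : MemLp f p (gegenbauerMeasure α) := by
  have := isFiniteMeasure_gegenbauerMeasure hα
  obtain ⟨C, hC⟩ := isCompact_Icc.exists_bound_of_continuousOn (s := Set.Icc (-1) 1) hf.continuousOn
  exact .of_bound hf.aestronglyMeasurable C ((ae_gegenbauerMeasure_mem_Icc α).mono hC)

end GegenbauerWeight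

section MomentBound

theorem integral_rpow_mul_one_sub_rpow_le {m a : ℝ} (hm : 0 < m) (ha : -1 < a) :
    ∫ u in (0 : ℝ)..1, u ^ m * (1 - u) ^ a ≤ Gamma (a + 1) * m ^ (-(a + 1)) := by
  have hint : IntegrableOn (fun t => t ^ a * rexp (-(m * t))) (Set.Ioi 0) := by
    simpa using integrableOn_rpow_mul_exp_neg_mul_rpow ha one_pos hm
  have hexp {t : ℝ} (ht : t ∈ Set.Ioc (0 : ℝ) 1) : (1 - t) ^ m ≤ rexp (-(m * t)) := by
    rw [mul_comm, ← neg_mul, exp_mul]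
    exact rpow_le_rpow (sub_nonneg.mpr ht.2) (one_sub_le_exp_neg t) hm.le
  calc ∫ u in (0 : ℝ)..1, u ^ m * (1 - u) ^ a
    _ = ∫ t in (0 : ℝ)..1, t ^ a * (1 - t) ^ m := by
      simpa [mul_comm] using
        (integral_comp_sub_left (fun u : ℝ => u ^ m * (1 - u) ^ a) 1 (a := 0) (b := 1)).symm
    _ = ∫ t in Set.Ioc (0 : ℝ) 1, t ^ a * (1 - t) ^ m := integral_of_le zero_le_one
    _ ≤ ∫ t in Set.Ioc (0 : ℝ) 1, t ^ a * rexp (-(m * t)) :=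
      setIntegral_mono_of_nonneg
        (fun t ht => mul_nonneg (rpow_nonneg ht.1.le a) (rpow_nonneg (sub_nonneg.mpr ht.2) m))
        (fun t ht => mul_le_mul_of_nonneg_left (hexp ht) (rpow_nonneg ht.1.le a))
        (hint.mono_set Set.Ioc_subset_Ioi_self)
    _ ≤ ∫ t in Set.Ioi (0 : ℝ), t ^ a * rexp (-(m * t)) :=
      setIntegral_mono_set hint
        ((ae_restrict_mem measurableSet_Ioi).mono fun t ht =>
          mul_nonneg (rpow_nonneg (le_of_lt ht) a) (exp_nonneg _))
        Set.Ioc_subset_Ioi_self.eventuallyLE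
    _ = Gamma (a + 1) * m ^ (-(a + 1)) := by
      rw [rpow_neg_eq_inv_rpow, mul_comm, ← one_div,
        ← integral_rpow_mul_exp_neg_mul_Ioi (by linarith) hm, add_sub_cancel_right]

theorem integral_eq_two_mul_integral_of_even {f : ℝ → ℝ} (hf : ∀ y, f (-y) = f y) {a : ℝ}
    (hint : IntervalIntegrable f volume 0 a) : ∫ y in -a..a, f y = 2 * ∫ y in 0..a, f y := by
  have hneg : ∫ y in -a..0, f y = ∫ y in 0..a, f y := by
    simpa [hf] using (integral_comp_neg f (a := 0) (b := a)).symm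
  have hint' : IntervalIntegrable f volume (-a) 0 := by
    simpa [hf] using ((IntervalIntegrable.iff_comp_neg (a := 0) (b := a)).mp hint).symm
  rw [← integral_add_adjacent_intervals hint' hint, hneg, two_mul]

theorem two_mul_integral_pow_mul_one_sub_sq_rpow {n : ℕ} (hn : n ≠ 0) (α : ℝ) :
    2 * ∫ y in (0 : ℝ)..1, y ^ (2 * n) * (1 - y ^ 2) ^ α =
      ∫ u in (0 : ℝ)..1, u ^ (n - 1 / 2 : ℝ) * (1 - u) ^ α := by
  have hsub := integral_comp_mul_deriv_of_deriv_nonneg (a := 0) (b := 1) (f := fun y : ℝ => y ^ 2)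
    (f' := fun y => 2 * y) (g := fun u => u ^ (n - 1 / 2 : ℝ) * (1 - u) ^ α) (by fun_prop)
    (fun y _ => by simpa using hasDerivAt_pow 2 y) (fun y hy => by simpa using hy.1.le)
  rw [one_pow, zero_pow two_ne_zero] at hsub
  rw [← hsub, ← intervalIntegral.integral_const_mul]
  refine integral_congr fun y hy => ?_
  have hy0 : 0 ≤ y := by simpa using hy.1
  have hpow : y ^ (2 * n) = (y ^ 2) ^ (n - 1 / 2 : ℝ) * y := by
    have h2n : 2 * (n - 1 / 2 : ℝ) + 1 = (2 * n : ℕ) := by push_cast; ring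
    have h2n0 : 2 * (n - 1 / 2 : ℝ) + 1 ≠ 0 := by rw [h2n]; positivity
    rw [← rpow_two, ← rpow_mul hy0, ← rpow_add_one' hy0 h2n0, h2n, rpow_natCast]
  simp only [Function.comp_apply, hpow]
  ring

theorem integral_pow_gegenbauerMeasure_le {α : ℝ} (hα : 0 ≤ α) {n : ℕ} (hn : n ≠ 0) :
    ∫ y, y ^ (2 * n) ∂gegenbauerMeasure α ≤ Gamma (α + 1) * (n - 1 / 2 : ℝ) ^ (-(α + 1)) := by
  have hm : (0 : ℝ) < n - 1 / 2 := by
    have : (1 : ℝ) ≤ n := by exact_mod_cast Nat.one_le_iff_ne_zero.mpr hn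
    linarith
  have hcont : Continuous fun y : ℝ => y ^ (2 * n) * (1 - y ^ 2) ^ α :=
    by fun_prop (disch := exact hα)
  calc ∫ y, y ^ (2 * n) ∂gegenbauerMeasure α
    _ = ∫ y in (-1 : ℝ)..1, y ^ (2 * n) * (1 - y ^ 2) ^ α := by
      simp only [integral_gegenbauerMeasure, smul_eq_mul, mul_comm]
    _ = 2 * ∫ y in (0 : ℝ)..1, y ^ (2 * n) * (1 - y ^ 2) ^ α :=
      integral_eq_two_mul_integral_of_even (fun y => by rw [(even_two_mul n).neg_pow, neg_sq])
        (hcont.intervalIntegrable 0 1)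
    _ = ∫ u in (0 : ℝ)..1, u ^ (n - 1 / 2 : ℝ) * (1 - u) ^ α :=
      two_mul_integral_pow_mul_one_sub_sq_rpow hn α
    _ ≤ _ := integral_rpow_mul_one_sub_rpow_le hm (by linarith)

end MomentBound

section FourierEigenfunctions

open Complex (I)

theorem finiteFourierL2_toLp_eq_smul {c : ℝ} {ν : Measure ℝ} [IsFiniteMeasure ν] {f : ℝ → ℂ}
    (hf : MemLp f 2 ν) {a : ℂ} (hfa : finiteFourier c ν f = a • f) :
    finiteFourierL2 c ν (hf.toLp f) = a • hf.toLp f := by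
  rw [← MemLp.toLp_const_smul]
  refine MemLp.toLp_congr (memLp_finiteFourier _) _ (.of_eq ?_)
  rw [← hfa, finiteFourier_eq_fourierIntegral, finiteFourier_eq_fourierIntegral,
    VectorFourier.fourierIntegral_congr_ae _ _ _ hf.coeFn_toLp]

variable {α : ℝ}

theorem finiteFourier_gegenbauerMeasure (c α : ℝ) (φ : ℝ → ℂ) (x : ℝ) :
    finiteFourier c (gegenbauerMeasure α) φ x =
      ∫ y in (-1 : ℝ)..1, Complex.exp (I * (c * x * y)) * φ y * (((1 - y ^ 2) ^ α : ℝ) : ℂ) := by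
  simp only [finiteFourier, integral_gegenbauerMeasure, Complex.real_smul, mul_comm]

theorem inner_toLp_gegenbauerMeasure {f g : ℝ → ℂ} (hf : MemLp f 2 (gegenbauerMeasure α))
    (hg : MemLp g 2 (gegenbauerMeasure α)) :
    inner ℂ (hf.toLp f) (hg.toLp g) =
      ∫ y in (-1 : ℝ)..1, g y * (starRingEnd ℂ) (f y) * (((1 - y ^ 2) ^ α : ℝ) : ℂ) := by
  calc inner ℂ (hf.toLp f) (hg.toLp g)
    _ = ∫ y, inner ℂ (f y) (g y) ∂gegenbauerMeasure α := by
      rw [L2.inner_def]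
      refine integral_congr_ae ?_
      filter_upwards [hf.coeFn_toLp, hg.coeFn_toLp] with y hfy hgy
      rw [hfy, hgy]
    _ = _ := by
      simp only [integral_gegenbauerMeasure, RCLike.inner_apply, Complex.real_smul, mul_comm]

theorem norm_eigenvalue_gegenbauerMeasure_sq_le {c : ℝ} (hα : 0 ≤ α) {n : ℕ} (hn : n ≠ 0)
    {ψ : ℕ → ℝ → ℂ} {μ : ℕ → ℂ} (hcont : ∀ k, Continuous (ψ k))
    (heig : ∀ k, finiteFourier c (gegenbauerMeasure α) (ψ k) = μ k • ψ k)
    (horth : ∀ j k, (∫ y in (-1 : ℝ)..1, ψ j y * (starRingEnd ℂ) (ψ k y) *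
      (((1 - y ^ 2) ^ α : ℝ) : ℂ)) = if j = k then 1 else 0)
    (hμ : Antitone fun k => ‖μ k‖) :
    ‖μ n‖ ^ 2 ≤ 2 * ((|c| ^ n / (n.factorial * 2 ^ (n - 1))) ^ 2 *
      (Gamma (α + 1) * (n - 1 / 2 : ℝ) ^ (-(α + 1)))) := by
  have := isFiniteMeasure_gegenbauerMeasure hα
  have hψ k : MemLp (ψ k) 2 (gegenbauerMeasure α) :=
    memLp_gegenbauerMeasure_of_continuous hα (hcont k) 2
  have he : Orthonormal ℂ fun k : Fin (n + 1) => (hψ k).toLp := by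
    refine orthonormal_iff_ite.mpr fun j k => ?_
    simp only [inner_toLp_gegenbauerMeasure, horth, Fin.val_inj, eq_comm]
  have hle := norm_eigenvalue_finiteFourierL2_le (ae_gegenbauerMeasure_mem_Icc α)
    (n.lt_succ_self.trans_eq (Fintype.card_fin _).symm) he
    (fun k => finiteFourierL2_toLp_eq_smul (hψ k) (heig k)) (norm_nonneg (μ n))
    fun k => hμ (Nat.le_of_lt_succ k.is_lt)
  have hmass : (gegenbauerMeasure α).real Set.univ ≤ 2 :=
    ENNReal.toReal_le_of_le_ofReal zero_le_two (by simpa using gegenbauerMeasure_univ_le hα)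
  have hmoment0 : 0 ≤ ∫ y, y ^ (2 * n) ∂gegenbauerMeasure α :=
    integral_nonneg fun y => (even_two_mul n).pow_nonneg y
  calc ‖μ n‖ ^ 2
    _ ≤ (√((gegenbauerMeasure α).real Set.univ) * (|c| ^ n / (n.factorial * 2 ^ (n - 1)) *
        √(∫ y, y ^ (2 * n) ∂gegenbauerMeasure α))) ^ 2 := by gcongr
    _ = (gegenbauerMeasure α).real Set.univ * ((|c| ^ n / (n.factorial * 2 ^ (n - 1))) ^ 2 *
        ∫ y, y ^ (2 * n) ∂gegenbauerMeasure α) := by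
      rw [mul_pow, mul_pow, sq_sqrt measureReal_nonneg, sq_sqrt hmoment0]
    _ ≤ _ := by
      gcongr
      exact integral_pow_gegenbauerMeasure_le hα hn

end FourierEigenfunctions

section Constants

theorem two_pi_mul_mul_pow_le_factorial_sq {m : ℝ} (hm : 0 ≤ m) {n : ℕ} (hmn : m ≤ n) :
    2 * π * m * (m / rexp 1) ^ (2 * n) ≤ (n.factorial : ℝ) ^ 2 := by
  calc 2 * π * m * (m / rexp 1) ^ (2 * n)
    _ ≤ 2 * π * n * (n / rexp 1) ^ (2 * n) := by gcongr
    _ = (√(2 * π * n) * (n / rexp 1) ^ n) ^ 2 := by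
      rw [mul_pow, sq_sqrt (by positivity), ← pow_mul, mul_comm n 2]
    _ ≤ (n.factorial : ℝ) ^ 2 := by
      gcongr
      exact Stirling.le_factorial_stirling n

theorem sq_pow_div_factorial_mul_two_pow_le {m : ℝ} (hm : 0 < m) {n : ℕ} (hn : n ≠ 0)
    (hmn : m ≤ n) (c : ℝ) :
    (c ^ n / (n.factorial * 2 ^ (n - 1))) ^ 2 ≤
      2 / (π * m) * (rexp 1 * c / (2 * m)) ^ (2 * n) := by
  have hpow : 0 ≤ (c / 2) ^ (2 * n) := (even_two_mul n).pow_nonneg _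
  have htwo : (2 : ℝ) ^ n = 2 * 2 ^ (n - 1) := (mul_pow_sub_one hn 2).symm
  calc (c ^ n / (n.factorial * 2 ^ (n - 1))) ^ 2
    _ = 4 * (c / 2) ^ (2 * n) / (n.factorial : ℝ) ^ 2 := by
      rw [pow_mul', div_pow c, htwo]
      field_simp
      norm_num
    _ ≤ 4 * (c / 2) ^ (2 * n) / (2 * π * m * (m / rexp 1) ^ (2 * n)) := by
      gcongr
      exact two_pi_mul_mul_pow_le_factorial_sq hm.le hmn
    _ = 2 / (π * m) * ((c / 2) / (m / rexp 1)) ^ (2 * n) := by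
      rw [div_pow (c / 2)]
      field_simp
      norm_num
    _ = 2 / (π * m) * (rexp 1 * c / (2 * m)) ^ (2 * n) := by
      congr 2
      field_simp

theorem two_div_exp_rpow_mul_rpow {c m : ℝ} (hc : 0 < c) (hm : 0 < m) (p : ℝ) :
    (2 / rexp 1) ^ p * (rexp 1 * c / (2 * m)) ^ p = c ^ p * m ^ (-p) := by
  rw [← mul_rpow (by positivity) (by positivity), rpow_neg hm.le, ← div_eq_mul_inv,
    ← div_rpow hc.le hm.le]
  congr 1
  field_simp

theorem rpow_add_two_le_rpow_div_log_sq {s : ℝ} (hs0 : 0 < s) (hs1 : s < 1) (p : ℝ) :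
    s ^ (p + 2) ≤ s ^ p / log s ^ 2 := by
  have hlog : 0 < log s ^ 2 := sq_pos_of_neg (log_neg hs0 hs1)
  have hslog : (s * log s) ^ 2 ≤ 1 := by
    rw [mul_comm, sq_le_one_iff_abs_le_one]
    exact (abs_log_mul_self_lt s hs0 hs1.le).le
  rw [le_div_iff₀ hlog, rpow_add hs0, rpow_two, mul_assoc, ← mul_pow]
  exact mul_le_of_le_one_right (rpow_nonneg hs0.le p) hslog

theorem eigenvalue_bound_eq_decay_bound {c m : ℝ} (hc : 0 < c) (hm : 0 < m) (α : ℝ) (n : ℕ) :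
    c / (2 * π) * (2 * (2 / (π * m) * (rexp 1 * c / (2 * m)) ^ (2 * n) *
      (Gamma (α + 1) * m ^ (-(α + 1))))) =
      2 / π ^ 2 * (2 / rexp 1) ^ (α + 2) * Gamma (α + 1) / c ^ (α + 1) *
        (rexp 1 * c / (2 * m)) ^ (2 * n + α + 2) := by
  set s := rexp 1 * c / (2 * m) with hs
  have hs0 : 0 < s := by positivity
  have hsplit : s ^ (2 * n + α + 2) = s ^ (2 * n) * s ^ (α + 2) := by
    rw [add_assoc, rpow_add hs0, ← rpow_natCast s (2 * n)]
    push_cast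
    rfl
  have hcm : (2 / rexp 1) ^ (α + 2) * s ^ (α + 2) = c ^ (α + 1) * c * (m ^ (-(α + 1)) / m) := by
    rw [hs, two_div_exp_rpow_mul_rpow hc hm, ← rpow_add_one hc.ne', ← rpow_sub_one hm.ne']
    ring_nf
  calc c / (2 * π) * (2 * (2 / (π * m) * s ^ (2 * n) * (Gamma (α + 1) * m ^ (-(α + 1)))))
    _ = 2 / π ^ 2 * Gamma (α + 1) / c ^ (α + 1) * s ^ (2 * n) *
        (c ^ (α + 1) * c * (m ^ (-(α + 1)) / m)) := by field_simp
    _ = _ := by rw [← hcm, hsplit]; ring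

theorem decay_bound_le_decay_bound_div_log_sq {c α : ℝ} (hc : 0 < c) (hα : -1 < α) {x : ℝ}
    (hx : rexp 1 * c < x) (p : ℝ) :
    2 / π ^ 2 * (2 / rexp 1) ^ (α + 2) * Gamma (α + 1) / c ^ (α + 1) *
        (rexp 1 * c / x) ^ (p + 2) ≤
      π / 2 * (2 / rexp 1) ^ (α + 2) * Gamma (α + 1) /
        (c ^ (α + 1) * log (x / (rexp 1 * c)) ^ 2) * (rexp 1 * c / x) ^ p := by
  have hx0 : 0 < x := lt_trans (by positivity) hx
  have hΓ : 0 < Gamma (α + 1) := Gamma_pos_of_pos (by linarith)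
  have hπ : 2 / π ^ 2 ≤ π / 2 := by
    rw [div_le_div_iff₀ (by positivity) two_pos]
    nlinarith [one_le_pow₀ (n := 3) (one_le_two.trans two_le_pi), two_le_pi]
  set s := rexp 1 * c / x with hs
  have hlog : log (x / (rexp 1 * c)) ^ 2 = log s ^ 2 := by
    rw [hs, ← inv_div, log_inv, neg_sq]
  calc 2 / π ^ 2 * (2 / rexp 1) ^ (α + 2) * Gamma (α + 1) / c ^ (α + 1) * s ^ (p + 2)
    _ ≤ π / 2 * (2 / rexp 1) ^ (α + 2) * Gamma (α + 1) / c ^ (α + 1) * (s ^ p / log s ^ 2) := by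
      gcongr
      exact rpow_add_two_le_rpow_div_log_sq (by positivity) ((div_lt_one hx0).mpr hx) p
    _ = _ := by rw [hlog]; ring

end Constants

theorem lambda_decay_general (c α : ℝ) (hc : 0 < c) (hα : 0 ≤ α) (ψ : ℕ → ℝ → ℂ) (μ : ℕ → ℂ)
    (hcont : ∀ n, Continuous (ψ n))
    (heig : ∀ n, ∀ x : ℝ,
      (∫ y in (-1 : ℝ)..1, Complex.exp (Complex.I * (c * x * y)) * ψ n y *
          (((1 - y ^ 2) ^ α : ℝ) : ℂ)) = μ n * ψ n x)
    (horth : ∀ m n, (∫ y in (-1 : ℝ)..1, ψ m y * (starRingEnd ℂ) (ψ n y) *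
        (((1 - y ^ 2) ^ α : ℝ) : ℂ)) = if m = n then 1 else 0)
    (hdec : ∀ n, ‖μ (n + 1)‖ ≤ ‖μ n‖) {n : ℕ} (hn : n ≠ 0) :
    c / (2 * π) * ‖μ n‖ ^ 2 ≤
      2 / π ^ 2 * (2 / rexp 1) ^ (α + 2) * Gamma (α + 1) / c ^ (α + 1) *
        (rexp 1 * c / (2 * n - 1)) ^ (2 * n + α + 2) := by
  have hn1 : (1 : ℝ) ≤ n := by exact_mod_cast Nat.one_le_iff_ne_zero.mpr hn
  have heigν k : finiteFourier c (gegenbauerMeasure α) (ψ k) = μ k • ψ k :=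
    funext fun x => (finiteFourier_gegenbauerMeasure c α (ψ k) x).trans (heig k x)
  have hμ := norm_eigenvalue_gegenbauerMeasure_sq_le hα hn hcont heigν horth
    (antitone_nat_of_succ_le hdec)
  rw [abs_of_pos hc] at hμ
  have hm : (0 : ℝ) < n - 1 / 2 := by linarith
  have hs : (2 * n - 1 : ℝ) = 2 * (n - 1 / 2) := by ring
  rw [hs, ← eigenvalue_bound_eq_decay_bound hc hm]
  have : 0 < Gamma (α + 1) := Gamma_pos_of_pos (by linarith)
  refine mul_le_mul_of_nonneg_left (hμ.trans ?_) (by positivity)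
  gcongr
  exact sq_pow_div_factorial_mul_two_pow_le hm hn (by linarith) c

/-- Decay of the eigenvalues `λ_n^{(α)}(c) = (c/(2π))|μ_n^{(α)}(c)|²` of the operator
`Q_c^{(α)} = (c/(2π)) (F_c^{(α)})^* F_c^{(α)}`, where `μ_n` are the eigenvalues of the weighted
finite Fourier transform `F_c^{(α)} f(x) = ∫_{-1}^1 e^{icxy} f(y)(1-y²)^α dy`, hypothesized as a
complete orthonormal system of continuous eigenfunctions with decreasing eigenvalue moduli.
Then for every integer `n > (ec+1)/2`,
`λ_n ≤ (K_α/(c^{α+1} log²((2n-1)/(ec)))) (ec/(2n-1))^{2n+α}` with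
`K_α = (π/2)(2/e)^{α+2} Γ(α+1)`. -/
theorem lambda_decay (c α : ℝ) (hc : 0 < c) (hα : 0 ≤ α)
    (ψ : ℕ → ℝ → ℂ) (μ : ℕ → ℂ)
    (hcont : ∀ n, Continuous (ψ n))
    (heig : ∀ n, ∀ x : ℝ,
      (∫ y in (-1 : ℝ)..1, Complex.exp (Complex.I * (c * x * y)) * ψ n y *
          (((1 - y ^ 2) ^ α : ℝ) : ℂ)) = μ n * ψ n x)
    (horth : ∀ m n, (∫ y in (-1 : ℝ)..1, ψ m y * (starRingEnd ℂ) (ψ n y) *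
        (((1 - y ^ 2) ^ α : ℝ) : ℂ)) = if m = n then 1 else 0)
    (hdec : ∀ n, ‖μ (n + 1)‖ ≤ ‖μ n‖)
    (hcomplete : ∀ f : ℝ → ℂ, Continuous f →
      (∀ n, (∫ y in (-1 : ℝ)..1, f y * (starRingEnd ℂ) (ψ n y) *
          (((1 - y ^ 2) ^ α : ℝ) : ℂ)) = 0) → ∀ x ∈ Set.Icc (-1 : ℝ) 1, f x = 0) :
    ∀ n : ℕ, (Real.exp 1 * c + 1) / 2 < (n : ℝ) →
      c / (2 * π) * ‖μ n‖ ^ 2 ≤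
        (π / 2) * (2 / Real.exp 1) ^ (α + 2) * Real.Gamma (α + 1) /
          (c ^ (α + 1) * (Real.log ((2 * (n : ℝ) - 1) / (Real.exp 1 * c))) ^ 2) *
          (Real.exp 1 * c / (2 * (n : ℝ) - 1)) ^ (2 * (n : ℝ) + α) := by
  exact fun n hn => (lambda_decay_general c α hc hα ψ μ hcont heig horth hdec
    (Nat.cast_ne_zero.mp (lt_trans (by positivity) hn).ne')).trans
      (decay_bound_le_decay_bound_div_log_sq hc (by linarith) (by linarith) (2 * n + α))
end

section
/- Let 0 ≤ α ≤ 1/4, c > 0, and n an integer such that q = c²/χ_n^α(c) < 3/17. Then sup_{x∈[0,1]} √((1-x²)(1-qx²)) · (1-x²)^α · |ψ_{n,c}^{(α)}(x)|² ≤ |ψ_{n,c}^{(α)}(0)|² + |ψ_{n,c}^{(α)'}(0)|²/χ_n^α(c) ≤ 2α+1. -/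
open Real MeasureTheory intervalIntegral

/-!
With `D = √((1 - x²)(1 - q x²)) (1 - x²)^α` and `s = (1 - x²) / (1 - q x²)`, the function `V = √D ψ`
satisfies `√s (√s V')' + (χ + θ(x²)) V = 0`. For small `q` the potential `θ` is nonnegative and
nondecreasing on `[0, 1)`, so Sonin's energy `V² + s V'² / (χ + θ(x²))` decreases away from the
origin, where it is at most `ψ(0)² + ψ'(0)² / χ`. This is the pointwise bound.

The energy `E = ψ² + (1 - x²) ψ'² / (χ (1 - q x²))`, on the contrary, grows away from the origin, so
its value `A` at `0` is at most its weighted means. Virial identities express these means by the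
second moment of `ψ²`. Comparing `A` with the mean of `(1 - q x²) E` costs an error
`q A ∫ x² (1 - x²)^α`, which is compensated by a quantitative form of the growth of `E`. The outcome
is `A ∫ (1 - x²)^α ≤ 2`, and the total mass of the weight is at least `2 / (1 + α)`.
-/

section Factors

variable {q x : ℝ}

lemma one_sub_sq_pos (hx : x ∈ Set.Ioo (-1 : ℝ) 1) : 0 < 1 - x ^ 2 := by
  nlinarith [hx.1, hx.2]

lemma one_sub_mul_sq_pos (hq : q < 1) (hx : x ∈ Set.Icc (-1 : ℝ) 1) : 0 < 1 - q * x ^ 2 := by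
  have hX : 0 ≤ 1 - x ^ 2 := by nlinarith [hx.1, hx.2]
  rcases le_total q 0 with hq0 | hq0
  · linarith [mul_nonneg (neg_nonneg.2 hq0) (sq_nonneg x)]
  · linarith [mul_nonneg hq0 hX]

lemma hasDerivAt_one_sub_mul_sq (q x : ℝ) :
    HasDerivAt (fun x => 1 - q * x ^ 2) (-(2 * q * x)) x :=
  (((hasDerivAt_pow 2 x).const_mul q).const_sub 1).congr_deriv (by push_cast; ring)

lemma hasDerivAt_one_sub_sq (x : ℝ) : HasDerivAt (fun x => 1 - x ^ 2) (-(2 * x)) x := by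
  simpa using hasDerivAt_one_sub_mul_sq 1 x

lemma hasDerivAt_one_sub_mul_sq_rpow (β : ℝ) (hY : 1 - q * x ^ 2 ≠ 0) :
    HasDerivAt (fun x => (1 - q * x ^ 2) ^ β)
      (-(2 * β * q * x / (1 - q * x ^ 2)) * (1 - q * x ^ 2) ^ β) x :=
  ((hasDerivAt_one_sub_mul_sq q x).rpow_const (Or.inl hY)).congr_deriv <| by
    rw [rpow_sub_one hY]
    ring

lemma hasDerivAt_one_sub_sq_rpow (β : ℝ) (hX : 1 - x ^ 2 ≠ 0) :
    HasDerivAt (fun x => (1 - x ^ 2) ^ β)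
      (-(2 * β * x / (1 - x ^ 2)) * (1 - x ^ 2) ^ β) x := by
  simpa using hasDerivAt_one_sub_mul_sq_rpow (q := 1) (x := x) β (by simpa using hX)

end Factors

/-- `ψ`, with derivative `ψ'`, solves `L_c^{(α)} ψ = χ ψ` on `(-1, 1)`, where `c² = χ q`. The second
derivative is eliminated by means of the equation, which leaves a first-order system. -/
structure IsSpheroidalSolution (α χ q : ℝ) (ψ ψ' : ℝ → ℝ) : Prop where
  hasDerivAt : ∀ x ∈ Set.Ioo (-1 : ℝ) 1, HasDerivAt ψ (ψ' x) x
  hasDerivAt_deriv : ∀ x ∈ Set.Ioo (-1 : ℝ) 1, HasDerivAt ψ'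
    ((2 * (α + 1) * x * ψ' x - χ * (1 - q * x ^ 2) * ψ x) / (1 - x ^ 2)) x

lemma antitoneOn_sonin {I : Set ℝ} (hI : Convex ℝ I) {V V' V'' s s' R R' : ℝ → ℝ}
    (hV : ∀ x ∈ I, HasDerivAt V (V' x) x) (hV' : ∀ x ∈ I, HasDerivAt V' (V'' x) x)
    (hs : ∀ x ∈ I, HasDerivAt s (s' x) x) (hR : ∀ x ∈ I, HasDerivAt R (R' x) x)
    (hode : ∀ x ∈ I, s x * V'' x + s' x / 2 * V' x + R x * V x = 0)
    (hs0 : ∀ x ∈ I, 0 ≤ s x) (hR0 : ∀ x ∈ I, R x ≠ 0) (hR' : ∀ x ∈ I, 0 ≤ R' x) :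
    AntitoneOn (fun x => V x ^ 2 + s x * V' x ^ 2 / R x) I := by
  have hderiv : ∀ x ∈ I, HasDerivAt (fun x => V x ^ 2 + s x * V' x ^ 2 / R x)
      (-(s x * V' x ^ 2 * R' x / R x ^ 2)) x := fun x hx => by
    have := hR0 x hx
    refine (((hV x hx).fun_pow 2).fun_add
      (((hs x hx).fun_mul ((hV' x hx).fun_pow 2)).fun_div (hR x hx) this)).congr_deriv ?_
    push_cast
    field_simp
    linear_combination 2 * V' x * R x * hode x hx
  refine antitoneOn_of_hasDerivWithinAt_nonpos hI
    (fun x hx => (hderiv x hx).continuousAt.continuousWithinAt)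
    (fun x hx => (hderiv x (interior_subset hx)).hasDerivWithinAt) fun x hx => ?_
  have := hs0 x (interior_subset hx)
  have := hR' x (interior_subset hx)
  rw [neg_nonpos]
  positivity

/-- The potential `θ` of the Liouville normal form `√s (√s V')' + (χ + θ) V = 0` of the spheroidal
equation, where `s = (1 - x²) / (1 - q x²)`, written as a function of `y = x²`. -/
noncomputable def liouvillePotential (α q y : ℝ) : ℝ :=
  (1 - 4 * α ^ 2) * y / (4 * ((1 - y) * (1 - q * y))) + (4 * α + 1) / (4 * (1 - q * y))
    + 3 * (2 - q) / (4 * (1 - q * y) ^ 2) - 5 * (1 - q) / (4 * (1 - q * y) ^ 3)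

section Potential

variable {α q y : ℝ}

lemma hasDerivAt_liouvillePotential (hX : 1 - y ≠ 0) (hY : 1 - q * y ≠ 0) :
    HasDerivAt (liouvillePotential α q)
      (((1 - 4 * α ^ 2) * ((1 - q * y ^ 2) / (1 - y) ^ 2)
        + q * (4 * α + 1 + 6 * (2 - q) / (1 - q * y) - 15 * (1 - q) / (1 - q * y) ^ 2))
          / (4 * (1 - q * y) ^ 2)) y := by
  have dX : HasDerivAt (fun y => 1 - y) (-1) y := (hasDerivAt_id y).const_sub 1
  have dY : HasDerivAt (fun y => 1 - q * y) (-q) y := by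
    simpa using ((hasDerivAt_id y).const_mul q).const_sub 1
  refine (((((hasDerivAt_id y).const_mul (1 - 4 * α ^ 2)).fun_div
    ((dX.fun_mul dY).const_mul 4) (by simp [hX, hY])).fun_add
    ((hasDerivAt_const y (4 * α + 1)).fun_div (dY.const_mul 4) (by simp [hY]))).fun_add
    ((hasDerivAt_const y (3 * (2 - q))).fun_div ((dY.fun_pow 2).const_mul 4)
      (by simp [hY]))).fun_sub
    ((hasDerivAt_const y (5 * (1 - q))).fun_div ((dY.fun_pow 3).const_mul 4)
      (by simp [hY])) |>.congr_deriv ?_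
  have hY' : 1 - y * q ≠ 0 := by rwa [mul_comm]
  simp only [id]
  push_cast
  field_simp
  ring

lemma le_half_of_nine_mul_sq_le (hq1 : q < 1)
    (hq : 9 * q ^ 2 ≤ (1 - 2 * α) * (1 - q) * (1 + 2 * α - 2 * q)) : α ≤ 1 / 2 := by
  by_contra! h
  have : 0 < (2 * α - 1) * (1 - q) * (1 + 2 * α - 2 * q) :=
    mul_pos (mul_pos (by linarith) (by linarith)) (by linarith)
  nlinarith

lemma deriv_liouvillePotential_nonneg (hα : -(1 / 2) ≤ α) (hq0 : 0 ≤ q) (hq1 : q < 1)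
    (hq : 9 * q ^ 2 ≤ (1 - 2 * α) * (1 - q) * (1 + 2 * α - 2 * q)) (hy : y ∈ Set.Ico (0 : ℝ) 1) :
    0 ≤ deriv (liouvillePotential α q) y := by
  have hX : 0 < 1 - y := sub_pos.2 hy.2
  have hqy : q * y ≤ q := mul_le_of_le_one_right hq0 hy.2.le
  have hY : 0 < 1 - q * y := by linarith
  have hp : 0 < 1 - q := sub_pos.2 hq1
  have hα2 : 0 ≤ 1 - 4 * α ^ 2 := by
    nlinarith [le_half_of_nine_mul_sq_le hq1 hq]
  have hsing : 1 ≤ (1 - q * y ^ 2) / (1 - y) ^ 2 := by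
    rw [one_le_div (by positivity)]
    nlinarith [hy.1, mul_nonneg hy.1 hX.le, mul_nonneg hp.le (sq_nonneg y)]
  -- The terms regular at `y = 1` are smallest there, and `hq` makes the resulting bound `≥ 0`.
  have hend : 4 * α + 7 - 9 / (1 - q) ≤
      4 * α + 1 + 6 * (2 - q) / (1 - q * y) - 15 * (1 - q) / (1 - q * y) ^ 2 := by
    have hfactor : 4 * α + 1 + 6 * (2 - q) / (1 - q * y) - 15 * (1 - q) / (1 - q * y) ^ 2
        - (4 * α + 7 - 9 / (1 - q)) =
        (q - q * y) * (15 * (1 - q) + (3 + 6 * q) * (1 - q * y)) /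
          ((1 - q) * (1 - q * y) ^ 2) := by
      field_simp
      ring
    have : 0 ≤ q - q * y := sub_nonneg.2 hqy
    rw [← sub_nonneg, hfactor]
    positivity
  have hbound : 0 ≤ 1 - 4 * α ^ 2 + q * (4 * α + 7 - 9 / (1 - q)) := by
    have : 1 - 4 * α ^ 2 + q * (4 * α + 7 - 9 / (1 - q)) =
        ((1 - 2 * α) * (1 - q) * (1 + 2 * α - 2 * q) - 9 * q ^ 2) / (1 - q) := by
      field_simp
      ring
    rw [this]
    exact div_nonneg (sub_nonneg.2 hq) hp.le
  rw [(hasDerivAt_liouvillePotential hX.ne' hY.ne').deriv]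
  refine div_nonneg (hbound.trans ?_) (by positivity)
  exact add_le_add (le_mul_of_one_le_right hα2 hsing) (mul_le_mul_of_nonneg_left hend hq0)

lemma differentiableAt_liouvillePotential (hq1 : q < 1) (hy : y ∈ Set.Ico (0 : ℝ) 1) :
    DifferentiableAt ℝ (liouvillePotential α q) y :=
  (hasDerivAt_liouvillePotential (sub_pos.2 hy.2).ne'
    (by nlinarith [hy.1, hy.2] : 1 - q * y ≠ 0)).differentiableAt

lemma liouvillePotential_nonneg (hα : -(1 / 2) ≤ α) (hq0 : 0 ≤ q) (hq1 : q < 1)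
    (hq : 9 * q ^ 2 ≤ (1 - 2 * α) * (1 - q) * (1 + 2 * α - 2 * q)) (hy : y ∈ Set.Ico (0 : ℝ) 1) :
    0 ≤ liouvillePotential α q y := by
  have hmono : MonotoneOn (liouvillePotential α q) (Set.Ico 0 1) :=
    monotoneOn_of_deriv_nonneg (convex_Ico 0 1)
      (fun y hy => (differentiableAt_liouvillePotential hq1 hy).continuousAt.continuousWithinAt)
      (fun y hy => (differentiableAt_liouvillePotential hq1
        (interior_subset hy)).differentiableWithinAt)
      fun y hy => deriv_liouvillePotential_nonneg hα hq0 hq1 hq (interior_subset hy)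
  have hzero : liouvillePotential α q 0 = (2 * α + 1 + q) / 2 := by
    rw [liouvillePotential]
    ring
  refine le_trans ?_ (hmono ⟨le_rfl, one_pos⟩ hy hy.1)
  rw [hzero]
  linarith

end Potential

/-- The square root `√D` of `D = √((1 - x²)(1 - q x²)) (1 - x²)^α`; the product `V = √D ψ` satisfies
the Liouville normal form. -/
noncomputable def liouvilleAmplitude (α q x : ℝ) : ℝ :=
  (1 - x ^ 2) ^ ((2 * α + 1) / 4) * (1 - q * x ^ 2) ^ (1 / 4 : ℝ)

/-- The logarithmic derivative of `liouvilleAmplitude`. -/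
noncomputable def liouvilleLogDeriv (α q x : ℝ) : ℝ :=
  -(x / 2) * ((2 * α + 1) / (1 - x ^ 2) + q / (1 - q * x ^ 2))

section Amplitude

variable {α q x : ℝ}

lemma hasDerivAt_liouvilleAmplitude (hX : 1 - x ^ 2 ≠ 0) (hY : 1 - q * x ^ 2 ≠ 0) :
    HasDerivAt (liouvilleAmplitude α q) (liouvilleLogDeriv α q x * liouvilleAmplitude α q x) x :=
  ((hasDerivAt_one_sub_sq_rpow _ hX).fun_mul
    (hasDerivAt_one_sub_mul_sq_rpow _ hY)).congr_deriv <| by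
    rw [liouvilleLogDeriv, liouvilleAmplitude]
    ring

lemma hasDerivAt_liouvilleLogDeriv (hX : 1 - x ^ 2 ≠ 0) (hY : 1 - q * x ^ 2 ≠ 0) :
    HasDerivAt (liouvilleLogDeriv α q)
      (-(1 / 2) * ((2 * α + 1) * (1 + x ^ 2) / (1 - x ^ 2) ^ 2
        + q * (1 + q * x ^ 2) / (1 - q * x ^ 2) ^ 2)) x := by
  refine (((hasDerivAt_id x).div_const 2).fun_neg.fun_mul
    (((hasDerivAt_const x (2 * α + 1)).fun_div (hasDerivAt_one_sub_sq x) hX).fun_add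
      ((hasDerivAt_const x q).fun_div (hasDerivAt_one_sub_mul_sq q x) hY))).congr_deriv ?_
  have hY' : 1 - x ^ 2 * q ≠ 0 := by rwa [mul_comm]
  simp only [id]
  field_simp
  ring

lemma liouvilleAmplitude_sq (hX : 0 < 1 - x ^ 2) (hY : 0 ≤ 1 - q * x ^ 2) :
    liouvilleAmplitude α q x ^ 2 = √((1 - x ^ 2) * (1 - q * x ^ 2)) * (1 - x ^ 2) ^ α := by
  have hXexp : (2 * α + 1) / 4 * (2 : ℕ) = 1 / 2 + α := by push_cast; ring
  have hYexp : (1 / 4 : ℝ) * (2 : ℕ) = 1 / 2 := by norm_num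
  rw [liouvilleAmplitude, mul_pow, ← rpow_mul_natCast hX.le, ← rpow_mul_natCast hY, hXexp, hYexp,
    rpow_add hX, sqrt_mul hX.le, sqrt_eq_rpow, sqrt_eq_rpow, mul_right_comm]

end Amplitude

namespace IsSpheroidalSolution

variable {α χ q : ℝ} {ψ ψ' : ℝ → ℝ}

lemma antitoneOn_liouvilleEnergy (h : IsSpheroidalSolution α χ q ψ ψ') (hα : -(1 / 2) ≤ α)
    (hχ : 0 < χ) (hq0 : 0 ≤ q) (hq1 : q < 1)
    (hq : 9 * q ^ 2 ≤ (1 - 2 * α) * (1 - q) * (1 + 2 * α - 2 * q)) :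
    AntitoneOn (fun x => (liouvilleAmplitude α q x * ψ x) ^ 2
      + (1 - x ^ 2) / (1 - q * x ^ 2)
        * (liouvilleAmplitude α q x * (ψ' x + liouvilleLogDeriv α q x * ψ x)) ^ 2
        / (χ + liouvillePotential α q (x ^ 2))) (Set.Ico 0 1) := by
  have hI : ∀ x ∈ Set.Ico (0 : ℝ) 1, x ∈ Set.Ioo (-1 : ℝ) 1 :=
    fun x hx => ⟨by linarith [hx.1], hx.2⟩
  have hX := fun x hx => one_sub_sq_pos (hI x hx)
  have hY := fun x hx => one_sub_mul_sq_pos hq1 (Set.Ioo_subset_Icc_self (hI x hx))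
  have hsq : ∀ x ∈ Set.Ico (0 : ℝ) 1, x ^ 2 ∈ Set.Ico (0 : ℝ) 1 :=
    fun x hx => ⟨sq_nonneg x, by linarith [hX x hx]⟩
  have hg := fun x hx => hasDerivAt_liouvilleAmplitude (α := α) (hX x hx).ne' (hY x hx).ne'
  have hv := fun x hx => (h.hasDerivAt_deriv x (hI x hx)).fun_add
    ((hasDerivAt_liouvilleLogDeriv (α := α) (hX x hx).ne' (hY x hx).ne').fun_mul
      (h.hasDerivAt x (hI x hx)))
  refine antitoneOn_sonin (convex_Ico 0 1)
    (R' := fun x => 2 * x * deriv (liouvillePotential α q) (x ^ 2))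
    (fun x hx => ((hg x hx).fun_mul (h.hasDerivAt x (hI x hx))).congr_deriv (by ring))
    (fun x hx => (hg x hx).fun_mul (hv x hx))
    (fun x hx => (hasDerivAt_one_sub_sq x).fun_div (hasDerivAt_one_sub_mul_sq q x) (hY x hx).ne')
    (fun x hx => ((HasDerivAt.comp (h := fun t => t ^ 2) x
      (differentiableAt_liouvillePotential (α := α) hq1 (hsq x hx)).hasDerivAt
      (hasDerivAt_pow 2 x)).const_add χ).congr_deriv (by push_cast; ring))
    (fun x hx => ?_) (fun x hx => (div_pos (hX x hx) (hY x hx)).le) (fun x hx => ?_)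
    (fun x hx => ?_)
  · have hXx := (hX x hx).ne'
    have hYx := (hY x hx).ne'
    have hYx' : 1 - x ^ 2 * q ≠ 0 := by rwa [mul_comm]
    simp only [liouvilleLogDeriv, liouvillePotential]
    field_simp
    ring
  · have := liouvillePotential_nonneg hα hq0 hq1 hq (hsq x hx)
    positivity
  · exact mul_nonneg (by linarith [hx.1]) (deriv_liouvillePotential_nonneg hα hq0 hq1 hq (hsq x hx))

theorem amplitude_mul_sq_le (h : IsSpheroidalSolution α χ q ψ ψ') (hα : -(1 / 2) ≤ α)
    (hχ : 0 < χ) (hq0 : 0 ≤ q) (hq1 : q < 1)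
    (hq : 9 * q ^ 2 ≤ (1 - 2 * α) * (1 - q) * (1 + 2 * α - 2 * q))
    {x : ℝ} (hx : x ∈ Set.Icc (0 : ℝ) 1) :
    √((1 - x ^ 2) * (1 - q * x ^ 2)) * (1 - x ^ 2) ^ α * ψ x ^ 2 ≤ ψ 0 ^ 2 + ψ' 0 ^ 2 / χ := by
  rcases hx.2.eq_or_lt with rfl | hx1
  · simp only [one_pow, sub_self, zero_mul, sqrt_zero]
    positivity
  have hX : 0 < 1 - x ^ 2 := one_sub_sq_pos ⟨by linarith [hx.1], hx1⟩
  have hY : 0 < 1 - q * x ^ 2 := one_sub_mul_sq_pos hq1 ⟨by linarith [hx.1], hx.2⟩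
  have hθ : ∀ y ∈ Set.Ico (0 : ℝ) 1, 0 ≤ liouvillePotential α q y :=
    fun y => liouvillePotential_nonneg hα hq0 hq1 hq
  have hanti := h.antitoneOn_liouvilleEnergy hα hχ hq0 hq1 hq ⟨le_rfl, one_pos⟩ ⟨hx.1, hx1⟩ hx.1
  have hθx := hθ (x ^ 2) ⟨sq_nonneg x, by linarith⟩
  have hθ0 := hθ 0 ⟨le_rfl, one_pos⟩
  calc √((1 - x ^ 2) * (1 - q * x ^ 2)) * (1 - x ^ 2) ^ α * ψ x ^ 2
      = (liouvilleAmplitude α q x * ψ x) ^ 2 := by rw [mul_pow, liouvilleAmplitude_sq hX hY.le]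
    _ ≤ _ := le_add_of_nonneg_right (by positivity)
    _ ≤ _ := hanti
    _ = ψ 0 ^ 2 + ψ' 0 ^ 2 / (χ + liouvillePotential α q 0) := by
      simp [liouvilleAmplitude, liouvilleLogDeriv]
    _ ≤ ψ 0 ^ 2 + ψ' 0 ^ 2 / χ := by gcongr; exact le_add_of_nonneg_right hθ0

end IsSpheroidalSolution

/-- The integral `∫_{-1}^1 f(x) (1 - x²)^α dx` against the Gegenbauer weight. -/
noncomputable def gegenbauerIntegral (α : ℝ) (f : ℝ → ℝ) : ℝ :=
  ∫ x in (-1 : ℝ)..1, f x * (1 - x ^ 2) ^ α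

section GegenbauerIntegral

variable {α : ℝ} {f g k : ℝ → ℝ}

lemma continuous_one_sub_sq_rpow (hα : 0 ≤ α) : Continuous fun x : ℝ => (1 - x ^ 2) ^ α :=
  (by fun_prop : Continuous fun x : ℝ => 1 - x ^ 2).rpow_const fun _ => Or.inr hα

lemma intervalIntegrable_mul_one_sub_sq_rpow (hα : 0 ≤ α)
    (hf : ContinuousOn f (Set.Icc (-1) 1)) :
    IntervalIntegrable (fun x => f x * (1 - x ^ 2) ^ α) volume (-1) 1 :=
  (hf.mul (continuous_one_sub_sq_rpow hα).continuousOn).intervalIntegrable_of_Icc (by norm_num)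

lemma gegenbauerIntegral_congr (hfg : ∀ x ∈ Set.Ioo (-1 : ℝ) 1, f x = g x) :
    gegenbauerIntegral α f = gegenbauerIntegral α g :=
  integral_congr_Ioo_of_le (by norm_num) fun x hx => by simp only [hfg x hx]

lemma gegenbauerIntegral_mono (hα : 0 ≤ α) (hf : ContinuousOn f (Set.Icc (-1) 1))
    (hg : ContinuousOn g (Set.Icc (-1) 1)) (hfg : ∀ x ∈ Set.Ioo (-1 : ℝ) 1, f x ≤ g x) :
    gegenbauerIntegral α f ≤ gegenbauerIntegral α g :=
  integral_mono_on_of_le_Ioo (by norm_num) (intervalIntegrable_mul_one_sub_sq_rpow hα hf)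
    (intervalIntegrable_mul_one_sub_sq_rpow hα hg) fun x hx =>
      mul_le_mul_of_nonneg_right (hfg x hx) (rpow_nonneg (one_sub_sq_pos hx).le α)

lemma gegenbauerIntegral_nonneg (hf : ∀ x ∈ Set.Icc (-1 : ℝ) 1, 0 ≤ f x) :
    0 ≤ gegenbauerIntegral α f :=
  integral_nonneg (by norm_num) fun x hx =>
    mul_nonneg (hf x hx) (rpow_nonneg (by nlinarith [hx.1, hx.2]) α)

lemma gegenbauerIntegral_const_mul (c : ℝ) :
    gegenbauerIntegral α (fun x => c * f x) = c * gegenbauerIntegral α f := by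
  simp only [gegenbauerIntegral, mul_assoc, intervalIntegral.integral_const_mul]

lemma gegenbauerIntegral_eq_add_const_mul (hα : 0 ≤ α) (hf : ContinuousOn f (Set.Icc (-1) 1))
    (hg : ContinuousOn g (Set.Icc (-1) 1)) (c : ℝ)
    (hk : ∀ x ∈ Set.Ioo (-1 : ℝ) 1, k x = f x + c * g x) :
    gegenbauerIntegral α k = gegenbauerIntegral α f + c * gegenbauerIntegral α g := by
  rw [gegenbauerIntegral_congr hk, gegenbauerIntegral, gegenbauerIntegral, gegenbauerIntegral,
    ← intervalIntegral.integral_const_mul,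
    ← integral_add (intervalIntegrable_mul_one_sub_sq_rpow hα hf)
      ((intervalIntegrable_mul_one_sub_sq_rpow hα hg).const_mul c)]
  simp only [add_mul, mul_assoc]

lemma gegenbauerIntegral_eq_zero_of_hasDerivAt (hα : 0 ≤ α) {f' : ℝ → ℝ}
    (hf : ContinuousOn f (Set.Icc (-1) 1))
    (hf' : ∀ x ∈ Set.Ioo (-1 : ℝ) 1, HasDerivAt f (f' x) x)
    (hg : ContinuousOn g (Set.Icc (-1) 1))
    (hfg : ∀ x ∈ Set.Ioo (-1 : ℝ) 1, g x = (1 - x ^ 2) * f' x - 2 * (α + 1) * x * f x) :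
    gegenbauerIntegral α g = 0 := by
  have hderiv : ∀ x ∈ Set.Ioo (-1 : ℝ) 1,
      HasDerivAt (fun x => f x * ((1 - x ^ 2) * (1 - x ^ 2) ^ α)) (g x * (1 - x ^ 2) ^ α) x :=
    fun x hx => by
      have hX := (one_sub_sq_pos hx).ne'
      refine ((hf' x hx).fun_mul ((hasDerivAt_one_sub_sq x).fun_mul
        (hasDerivAt_one_sub_sq_rpow α hX))).congr_deriv ?_
      rw [hfg x hx]
      field_simp
      ring
  rw [gegenbauerIntegral, integral_eq_sub_of_hasDerivAt_of_le (by norm_num)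
    (hf.mul ((by fun_prop : Continuous fun x : ℝ => 1 - x ^ 2).mul
      (continuous_one_sub_sq_rpow hα)).continuousOn) hderiv
    (intervalIntegrable_mul_one_sub_sq_rpow hα hg)]
  simp

lemma gegenbauerIntegral_one_eq (hα : 0 ≤ α) : gegenbauerIntegral α (fun _ => 1) =
    (2 * α + 3) * gegenbauerIntegral α (fun x => x ^ 2) := by
  have hzero := gegenbauerIntegral_eq_zero_of_hasDerivAt hα (f := fun x => x)
    (g := fun x => 1 + -(2 * α + 3) * x ^ 2) (by fun_prop) (fun x _ => hasDerivAt_id x)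
    (by fun_prop) fun x _ => by ring
  rw [gegenbauerIntegral_eq_add_const_mul hα (f := fun _ => 1) (g := fun x => x ^ 2) (by fun_prop)
    (by fun_prop) _ fun _ _ => rfl] at hzero
  linarith

lemma two_div_le_gegenbauerIntegral_one (hα : 0 ≤ α) :
    2 / (1 + α) ≤ gegenbauerIntegral α fun _ => 1 := by
  have hc := continuous_one_sub_sq_rpow hα
  have hlin : Continuous fun x : ℝ => (1 - x) ^ α :=
    (by fun_prop : Continuous fun x : ℝ => 1 - x).rpow_const fun _ => Or.inr hα
  have hneg : ∫ x in (-1 : ℝ)..0, (1 - x ^ 2) ^ α = ∫ x in (0 : ℝ)..1, (1 - x ^ 2) ^ α := by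
    have := integral_comp_neg (a := 0) (b := 1) fun x : ℝ => (1 - x ^ 2) ^ α
    simpa using this.symm
  calc 2 / (1 + α) = 2 * ∫ x in (0 : ℝ)..1, (1 - x) ^ α := by
        rw [integral_comp_sub_left (fun x => x ^ α) 1, integral_rpow (Or.inl (by linarith))]
        simp [zero_rpow (by linarith : α + 1 ≠ 0), add_comm, div_eq_mul_inv]
    _ ≤ 2 * ∫ x in (0 : ℝ)..1, (1 - x ^ 2) ^ α := by
        gcongr
        exact integral_mono_on zero_le_one (hlin.intervalIntegrable _ _)
          (hc.intervalIntegrable _ _) fun x hx =>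
            rpow_le_rpow (by linarith [hx.2]) (by nlinarith [hx.1, hx.2]) hα
    _ = gegenbauerIntegral α fun _ => 1 := by
        simp only [gegenbauerIntegral, one_mul]
        rw [← integral_add_adjacent_intervals (hc.intervalIntegrable (-1) 0)
          (hc.intervalIntegrable 0 1), hneg, two_mul]

end GegenbauerIntegral

lemma apply_zero_le_of_hasDerivAt_mul {I : Set ℝ} (hI : Convex ℝ I) (h0 : (0 : ℝ) ∈ I)
    {f g : ℝ → ℝ} (hf : ∀ x ∈ I, HasDerivAt f (x * g x) x) (hg : ∀ x ∈ I, 0 ≤ g x)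
    {x : ℝ} (hx : x ∈ I) : f 0 ≤ f x := by
  have hcont : ContinuousOn f I := fun x hx => (hf x hx).continuousAt.continuousWithinAt
  have hderiv {J : Set ℝ} : ∀ y ∈ interior (I ∩ J),
      HasDerivWithinAt f (y * g y) (interior (I ∩ J)) y :=
    fun y hy => (hf y (interior_subset hy).1).hasDerivWithinAt
  rcases le_total 0 x with h | h
  · refine monotoneOn_of_hasDerivWithinAt_nonneg (hI.inter (convex_Ici 0))
      (hcont.mono Set.inter_subset_left) hderiv (fun y hy => ?_) ⟨h0, Set.self_mem_Ici⟩ ⟨hx, h⟩ h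
    exact mul_nonneg (interior_subset hy).2 (hg y (interior_subset hy).1)
  · refine antitoneOn_of_hasDerivWithinAt_nonpos (hI.inter (convex_Iic 0))
      (hcont.mono Set.inter_subset_left) hderiv (fun y hy => ?_) ⟨hx, h⟩ ⟨h0, Set.self_mem_Iic⟩ h
    exact mul_nonpos_of_nonpos_of_nonneg (interior_subset hy).2 (hg y (interior_subset hy).1)

/-- The energy `ψ² + (1 - x²) ψ'² / (χ (1 - q x²))`, which grows away from the origin. -/
noncomputable def sturmEnergy (χ q : ℝ) (ψ ψ' : ℝ → ℝ) (x : ℝ) : ℝ :=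
  ψ x ^ 2 + (1 - x ^ 2) / (χ * (1 - q * x ^ 2)) * ψ' x ^ 2

/-- The growth rate `E'(x) / x` of the energy `E` of `sturmEnergy` along a solution. -/
noncomputable def sturmGrowthRate (α χ q : ℝ) (ψ' : ℝ → ℝ) (x : ℝ) : ℝ :=
  2 * ((2 * α + 1) * (1 - q * x ^ 2) + q * (1 - x ^ 2)) * ψ' x ^ 2 / (χ * (1 - q * x ^ 2) ^ 2)

section Energy

variable {α χ q : ℝ} {ψ ψ' : ℝ → ℝ}

lemma sturmEnergy_zero : sturmEnergy χ q ψ ψ' 0 = ψ 0 ^ 2 + ψ' 0 ^ 2 / χ := by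
  simp [sturmEnergy, div_eq_inv_mul]

lemma one_sub_mul_sq_mul_sturmEnergy {x : ℝ} (hY : 1 - q * x ^ 2 ≠ 0) :
    (1 - q * x ^ 2) * sturmEnergy χ q ψ ψ' x =
      (1 - q * x ^ 2) * ψ x ^ 2 + 1 / χ * ((1 - x ^ 2) * ψ' x ^ 2) := by
  rw [sturmEnergy]
  field_simp

lemma continuousOn_sturmEnergy (hχ : χ ≠ 0) (hq1 : q < 1)
    (hψ : ContinuousOn ψ (Set.Icc (-1) 1)) (hψ' : ContinuousOn ψ' (Set.Icc (-1) 1)) :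
    ContinuousOn (sturmEnergy χ q ψ ψ') (Set.Icc (-1) 1) :=
  (hψ.pow 2).add (ContinuousOn.mul (ContinuousOn.div (by fun_prop) (by fun_prop)
    fun _ ht => mul_ne_zero hχ (one_sub_mul_sq_pos hq1 ht).ne') (hψ'.pow 2))

lemma continuousOn_sturmGrowthRate (hχ : χ ≠ 0) (hq1 : q < 1)
    (hψ' : ContinuousOn ψ' (Set.Icc (-1) 1)) :
    ContinuousOn (sturmGrowthRate α χ q ψ') (Set.Icc (-1) 1) :=
  ContinuousOn.div (by fun_prop) (by fun_prop)
    fun _ ht => mul_ne_zero hχ (pow_ne_zero 2 (one_sub_mul_sq_pos hq1 ht).ne')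

lemma le_sturmGrowthRate (hα : 0 ≤ α) (hχ : 0 < χ) (hq0 : 0 ≤ q) (hq1 : q < 1) {x : ℝ}
    (hx : x ∈ Set.Ioo (-1 : ℝ) 1) :
    2 * (α + 1) * ψ' x ^ 2 / χ ≤ sturmGrowthRate α χ q ψ' x := by
  have hX := one_sub_sq_pos hx
  have hY := one_sub_mul_sq_pos hq1 (Set.Ioo_subset_Icc_self hx)
  have hYY : (α + 1) * (1 - q * x ^ 2) ^ 2 ≤
      (2 * α + 1) * (1 - q * x ^ 2) + q * (1 - x ^ 2) := by
    have : 0 ≤ α * (1 - q * x ^ 2) + (α + 1) * ((1 - q * x ^ 2) * (q * x ^ 2))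
        + q * (1 - x ^ 2) := by positivity
    linarith
  rw [sturmGrowthRate, div_le_div_iff₀ hχ (by positivity)]
  have := mul_le_mul_of_nonneg_left hYY (by positivity : 0 ≤ 2 * χ * ψ' x ^ 2)
  linarith

-- Integration by parts of `x (E - A)` shows that the last bracket has weighted mean zero; adding
-- this multiple of it makes an inequality between means hold pointwise.
lemma kinetic_le_energy_excess_add_growth (hα : 0 ≤ α) (hχ : 0 < χ) (hq0 : 0 ≤ q) (hq1 : q < 1)
    {x : ℝ} (hx : x ∈ Set.Ioo (-1 : ℝ) 1) {A : ℝ} (hA : A ≤ sturmEnergy χ q ψ ψ' x) :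
    (1 - q) * (1 / χ) * (x ^ 2 * ((1 - x ^ 2) * ψ' x ^ 2)) ≤
      (1 - q * x ^ 2) * (sturmEnergy χ q ψ ψ' x - A) + (1 - q) / (2 * (α + 1)) *
        ((1 - (2 * α + 3) * x ^ 2) * (sturmEnergy χ q ψ ψ' x - A)
          + x ^ 2 * ((1 - x ^ 2) * sturmGrowthRate α χ q ψ' x)) := by
  set ρ := (1 - q) / (2 * (α + 1)) with hρ
  have : 0 ≤ ρ := div_nonneg (by linarith) (by linarith)
  have hρα : ρ * (2 * (α + 1)) = 1 - q := by rw [hρ]; field_simp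
  have hX := one_sub_sq_pos hx
  have hcoeff : 1 - q * x ^ 2 + ρ * (1 - (2 * α + 3) * x ^ 2) = (1 + ρ) * (1 - x ^ 2) := by
    linear_combination -x ^ 2 * hρα
  have hexcess : 0 ≤ (1 - q * x ^ 2 + ρ * (1 - (2 * α + 3) * x ^ 2))
      * (sturmEnergy χ q ψ ψ' x - A) := by
    rw [hcoeff]
    exact mul_nonneg (by positivity) (sub_nonneg.2 hA)
  have hgrowth := mul_le_mul_of_nonneg_left (le_sturmGrowthRate (ψ' := ψ') hα hχ hq0 hq1 hx)
    (by positivity : 0 ≤ ρ * (x ^ 2 * (1 - x ^ 2)))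
  linear_combination hexcess + hgrowth - x ^ 2 * (1 - x ^ 2) * ψ' x ^ 2 / χ * hρα

end Energy

namespace IsSpheroidalSolution

variable {α χ q : ℝ} {ψ ψ' : ℝ → ℝ}

lemma hasDerivAt_sturmEnergy (h : IsSpheroidalSolution α χ q ψ ψ') (hχ : χ ≠ 0) (hq1 : q < 1)
    {x : ℝ} (hx : x ∈ Set.Ioo (-1 : ℝ) 1) :
    HasDerivAt (sturmEnergy χ q ψ ψ') (x * sturmGrowthRate α χ q ψ' x) x := by
  have hX := (one_sub_sq_pos hx).ne'
  have hY := (one_sub_mul_sq_pos hq1 (Set.Ioo_subset_Icc_self hx)).ne'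
  have hY' : 1 - x ^ 2 * q ≠ 0 := by rwa [mul_comm]
  refine (((h.hasDerivAt x hx).fun_pow 2).fun_add (((hasDerivAt_one_sub_sq x).fun_div
    ((hasDerivAt_one_sub_mul_sq q x).const_mul χ) (mul_ne_zero hχ hY)).fun_mul
      ((h.hasDerivAt_deriv x hx).fun_pow 2))).congr_deriv ?_
  rw [sturmGrowthRate]
  push_cast
  field_simp
  ring

lemma sturmEnergy_zero_le (h : IsSpheroidalSolution α χ q ψ ψ') (hα : 0 ≤ α) (hχ : 0 < χ)
    (hq0 : 0 ≤ q) (hq1 : q < 1) {x : ℝ} (hx : x ∈ Set.Ioo (-1 : ℝ) 1) :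
    sturmEnergy χ q ψ ψ' 0 ≤ sturmEnergy χ q ψ ψ' x :=
  apply_zero_le_of_hasDerivAt_mul (convex_Ioo (-1) 1) (by norm_num)
    (fun _ => h.hasDerivAt_sturmEnergy hχ.ne' hq1)
    (fun _ hy => (by positivity : (0 : ℝ) ≤ _).trans (le_sturmGrowthRate hα hχ hq0 hq1 hy)) hx

lemma kinetic_virial (h : IsSpheroidalSolution α χ q ψ ψ') (hα : 0 ≤ α)
    (hψ : ContinuousOn ψ (Set.Icc (-1) 1)) (hψ' : ContinuousOn ψ' (Set.Icc (-1) 1))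
    {p p' p'' : ℝ → ℝ} (hp : ∀ x, HasDerivAt p (p' x) x) (hp' : ∀ x, HasDerivAt p' (p'' x) x)
    (hp'' : Continuous p'') :
    gegenbauerIntegral α (fun x => p x * ((1 - x ^ 2) * ψ' x ^ 2)) =
      χ * gegenbauerIntegral α (fun x => p x * ((1 - q * x ^ 2) * ψ x ^ 2))
        + 1 / 2 * gegenbauerIntegral α
          (fun x => ((1 - x ^ 2) * p'' x - 2 * (α + 1) * x * p' x) * ψ x ^ 2) := by
  have hpc : Continuous p := continuous_iff_continuousAt.2 fun x => (hp x).continuousAt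
  have hpc' : Continuous p' := continuous_iff_continuousAt.2 fun x => (hp' x).continuousAt
  have hzero := gegenbauerIntegral_eq_zero_of_hasDerivAt hα
    (f := fun x => p x * (ψ x * ψ' x) - 1 / 2 * (p' x * ψ x ^ 2))
    (g := fun x => p x * ((1 - x ^ 2) * ψ' x ^ 2)
      + -χ * (p x * ((1 - q * x ^ 2) * ψ x ^ 2))
      + -(1 / 2) * (((1 - x ^ 2) * p'' x - 2 * (α + 1) * x * p' x) * ψ x ^ 2)) (by fun_prop)
    (fun x hx => ((hp x).fun_mul ((h.hasDerivAt x hx).fun_mul (h.hasDerivAt_deriv x hx))).fun_sub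
      (((hp' x).fun_mul ((h.hasDerivAt x hx).fun_pow 2)).const_mul (1 / 2))) (by fun_prop)
    fun x hx => by
      have := (one_sub_sq_pos hx).ne'
      field_simp
      push_cast
      ring
  rw [gegenbauerIntegral_eq_add_const_mul hα (by fun_prop) (by fun_prop) _ fun _ _ => rfl,
    gegenbauerIntegral_eq_add_const_mul hα (by fun_prop) (by fun_prop) _ fun _ _ => rfl] at hzero
  linarith

lemma kinetic_eq (h : IsSpheroidalSolution α χ q ψ ψ') (hα : 0 ≤ α)
    (hψ : ContinuousOn ψ (Set.Icc (-1) 1)) (hψ' : ContinuousOn ψ' (Set.Icc (-1) 1)) :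
    gegenbauerIntegral α (fun x => (1 - x ^ 2) * ψ' x ^ 2) =
      χ * gegenbauerIntegral α (fun x => (1 - q * x ^ 2) * ψ x ^ 2) := by
  simpa [gegenbauerIntegral] using h.kinetic_virial hα hψ hψ' (fun x => hasDerivAt_const x 1)
    (fun x => hasDerivAt_const x 0) continuous_const

lemma second_kinetic_moment_eq (h : IsSpheroidalSolution α χ q ψ ψ') (hα : 0 ≤ α)
    (hψ : ContinuousOn ψ (Set.Icc (-1) 1)) (hψ' : ContinuousOn ψ' (Set.Icc (-1) 1)) :
    gegenbauerIntegral α (fun x => x ^ 2 * ((1 - x ^ 2) * ψ' x ^ 2)) =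
      χ * gegenbauerIntegral α (fun x => x ^ 2 * ((1 - q * x ^ 2) * ψ x ^ 2))
        + (gegenbauerIntegral α (fun x => ψ x ^ 2)
          - (2 * α + 3) * gegenbauerIntegral α (fun x => x ^ 2 * ψ x ^ 2)) := by
  have hremainder : gegenbauerIntegral α
      (fun x => ((1 - x ^ 2) * 2 - 2 * (α + 1) * x * (2 * x)) * ψ x ^ 2) =
      2 * gegenbauerIntegral α (fun x => ψ x ^ 2)
        + -(2 * (2 * α + 3)) * gegenbauerIntegral α (fun x => x ^ 2 * ψ x ^ 2) := by
    rw [← gegenbauerIntegral_const_mul]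
    exact gegenbauerIntegral_eq_add_const_mul hα (by fun_prop) (by fun_prop) _ fun x _ => by ring
  rw [h.kinetic_virial hα hψ hψ' (p := fun x => x ^ 2) (p' := fun x => 2 * x)
    (fun x => by simpa using hasDerivAt_pow 2 x)
    (fun x => by simpa using (hasDerivAt_id x).const_mul 2) continuous_const, hremainder]
  ring

lemma energy_excess_eq (h : IsSpheroidalSolution α χ q ψ ψ') (hα : 0 ≤ α)
    (hχ : χ ≠ 0) (hq1 : q < 1) (hψ : ContinuousOn ψ (Set.Icc (-1) 1))
    (hψ' : ContinuousOn ψ' (Set.Icc (-1) 1)) (A : ℝ) :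
    gegenbauerIntegral α (fun x => (1 - q * x ^ 2) * (sturmEnergy χ q ψ ψ' x - A)) =
      2 * (gegenbauerIntegral α (fun x => ψ x ^ 2)
        - q * gegenbauerIntegral α (fun x => x ^ 2 * ψ x ^ 2))
      - A * (gegenbauerIntegral α (fun _ => 1) - q * gegenbauerIntegral α (fun x => x ^ 2)) := by
  have hpotential : gegenbauerIntegral α (fun x => (1 - q * x ^ 2) * ψ x ^ 2) =
      gegenbauerIntegral α (fun x => ψ x ^ 2)
        + -q * gegenbauerIntegral α (fun x => x ^ 2 * ψ x ^ 2) :=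
    gegenbauerIntegral_eq_add_const_mul hα (by fun_prop) (by fun_prop) _ fun x _ => by ring
  have hmass : gegenbauerIntegral α (fun x => 1 - q * x ^ 2) =
      gegenbauerIntegral α (fun _ => 1) + -q * gegenbauerIntegral α (fun x => x ^ 2) :=
    gegenbauerIntegral_eq_add_const_mul hα (by fun_prop) (by fun_prop) _ fun x _ => by ring
  rw [gegenbauerIntegral_eq_add_const_mul hα
      (f := fun x => (1 - q * x ^ 2) * ψ x ^ 2 + 1 / χ * ((1 - x ^ 2) * ψ' x ^ 2))
      (g := fun x => 1 - q * x ^ 2) (by fun_prop) (by fun_prop) (-A) fun x hx => by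
        rw [← one_sub_mul_sq_mul_sturmEnergy
          (one_sub_mul_sq_pos hq1 (Set.Ioo_subset_Icc_self hx)).ne']
        ring,
    gegenbauerIntegral_eq_add_const_mul hα (by fun_prop) (by fun_prop) _ fun _ _ => rfl,
    h.kinetic_eq hα hψ hψ', hmass, hpotential]
  field_simp
  ring

lemma mul_second_moment_le (h : IsSpheroidalSolution α χ q ψ ψ') (hα : 0 ≤ α)
    (hχ : 0 < χ) (hq0 : 0 ≤ q) (hq1 : q < 1) (hψ : ContinuousOn ψ (Set.Icc (-1) 1))
    (hψ' : ContinuousOn ψ' (Set.Icc (-1) 1)) :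
    sturmEnergy χ q ψ ψ' 0 * (1 - q) * gegenbauerIntegral α (fun x => x ^ 2) ≤
      gegenbauerIntegral α (fun x => x ^ 2 * ((1 - q * x ^ 2) * ψ x ^ 2))
        + 1 / χ * gegenbauerIntegral α (fun x => x ^ 2 * ((1 - x ^ 2) * ψ' x ^ 2)) := by
  have hA : 0 ≤ sturmEnergy χ q ψ ψ' 0 := by
    rw [sturmEnergy_zero]
    positivity
  rw [← gegenbauerIntegral_const_mul,
    ← gegenbauerIntegral_eq_add_const_mul hα (by fun_prop) (by fun_prop) _ fun _ _ => rfl]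
  refine gegenbauerIntegral_mono hα (by fun_prop) (by fun_prop) fun x hx => ?_
  have hX := one_sub_sq_pos hx
  have hY := one_sub_mul_sq_pos hq1 (Set.Ioo_subset_Icc_self hx)
  calc sturmEnergy χ q ψ ψ' 0 * (1 - q) * x ^ 2
      ≤ sturmEnergy χ q ψ ψ' 0 * (1 - q * x ^ 2) * x ^ 2 := by
        gcongr
        nlinarith
    _ ≤ sturmEnergy χ q ψ ψ' x * (1 - q * x ^ 2) * x ^ 2 := by
        gcongr
        exact h.sturmEnergy_zero_le hα hχ hq0 hq1 hx
    _ = x ^ 2 * ((1 - q * x ^ 2) * sturmEnergy χ q ψ ψ' x) := by ring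
    _ = _ := by rw [one_sub_mul_sq_mul_sturmEnergy hY.ne']; ring

lemma energy_growth_eq_zero (h : IsSpheroidalSolution α χ q ψ ψ')
    (hα : 0 ≤ α) (hχ : χ ≠ 0) (hq1 : q < 1) (hψ : ContinuousOn ψ (Set.Icc (-1) 1))
    (hψ' : ContinuousOn ψ' (Set.Icc (-1) 1)) (A : ℝ) :
    gegenbauerIntegral α (fun x => (1 - (2 * α + 3) * x ^ 2) * (sturmEnergy χ q ψ ψ' x - A)
      + x ^ 2 * ((1 - x ^ 2) * sturmGrowthRate α χ q ψ' x)) = 0 := by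
  have hE := continuousOn_sturmEnergy hχ hq1 hψ hψ'
  have hκ := continuousOn_sturmGrowthRate (α := α) hχ hq1 hψ'
  exact gegenbauerIntegral_eq_zero_of_hasDerivAt hα
    (f := fun x => x * (sturmEnergy χ q ψ ψ' x - A)) (by fun_prop)
    (fun x hx => (hasDerivAt_id x).fun_mul ((h.hasDerivAt_sturmEnergy hχ hq1 hx).sub_const A))
    (by fun_prop) fun x _ => by simp only [id]; ring

lemma mul_second_kinetic_moment_le (h : IsSpheroidalSolution α χ q ψ ψ') (hα : 0 ≤ α)
    (hχ : 0 < χ) (hq0 : 0 ≤ q) (hq1 : q < 1) (hψ : ContinuousOn ψ (Set.Icc (-1) 1))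
    (hψ' : ContinuousOn ψ' (Set.Icc (-1) 1)) :
    (1 - q) * (1 / χ * gegenbauerIntegral α (fun x => x ^ 2 * ((1 - x ^ 2) * ψ' x ^ 2))) ≤
      gegenbauerIntegral α
        (fun x => (1 - q * x ^ 2) * (sturmEnergy χ q ψ ψ' x - sturmEnergy χ q ψ ψ' 0)) := by
  have hE := continuousOn_sturmEnergy hχ.ne' hq1 hψ hψ'
  have hκ := continuousOn_sturmGrowthRate (α := α) hχ.ne' hq1 hψ'
  set A := sturmEnergy χ q ψ ψ' 0
  calc (1 - q) * (1 / χ * gegenbauerIntegral α (fun x => x ^ 2 * ((1 - x ^ 2) * ψ' x ^ 2)))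
      = gegenbauerIntegral α
          (fun x => (1 - q) * (1 / χ) * (x ^ 2 * ((1 - x ^ 2) * ψ' x ^ 2))) := by
        rw [gegenbauerIntegral_const_mul, mul_assoc]
    _ ≤ gegenbauerIntegral α (fun x => (1 - q * x ^ 2) * (sturmEnergy χ q ψ ψ' x - A)
          + (1 - q) / (2 * (α + 1)) *
            ((1 - (2 * α + 3) * x ^ 2) * (sturmEnergy χ q ψ ψ' x - A)
              + x ^ 2 * ((1 - x ^ 2) * sturmGrowthRate α χ q ψ' x))) :=
        gegenbauerIntegral_mono hα (by fun_prop) (by fun_prop) fun x hx =>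
          kinetic_le_energy_excess_add_growth hα hχ hq0 hq1 hx
            (h.sturmEnergy_zero_le hα hχ hq0 hq1 hx)
    _ = _ := by
        rw [gegenbauerIntegral_eq_add_const_mul hα (by fun_prop) (by fun_prop) _ fun _ _ => rfl,
          h.energy_growth_eq_zero hα hχ.ne' hq1 hψ hψ', mul_zero, add_zero]

end IsSpheroidalSolution

lemma mul_mass_le_two {b q A I₀ I₂ M₂ k : ℝ} (hqb : q < b) (hq0 : 0 ≤ q) (hq1 : q ≤ 1)
    (hq : 2 * q ≤ (1 - q) ^ 2) (hA : 0 ≤ A) (hI₂ : 0 ≤ I₂) (hM₂ : 0 ≤ M₂) (hI₀ : I₀ = b * I₂)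
    (hsecond : b * M₂ ≤ 1 → A * (1 - q) * I₂ ≤ 2 * k)
    (hmean : A * (I₀ - q * I₂) ≤ 2 * (1 - q * M₂))
    (hgrowth : (1 - q) * k ≤ 2 * (1 - q * M₂) - A * (I₀ - q * I₂)) : A * I₀ ≤ 2 := by
  have hAI : 0 ≤ A * I₂ := mul_nonneg hA hI₂
  rcases le_total 1 (b * M₂) with hm | hm
  · have hbq : (A * I₀) * (b - q) ≤ 2 * (b - q) := by
      have := mul_le_mul_of_nonneg_left hmean (hq0.trans hqb.le)
      have := mul_le_mul_of_nonneg_left hm hq0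
      subst hI₀
      linarith
    exact le_of_mul_le_mul_right hbq (sub_pos.2 hqb)
  · have := mul_le_mul_of_nonneg_left (hsecond hm) (sub_nonneg.2 hq1)
    have := mul_le_mul_of_nonneg_right hq hAI
    linarith [mul_nonneg hq0 hM₂]

lemma two_mul_le_sq_of_nine_mul_sq_le {α q : ℝ} (hq0 : 0 ≤ q) (hq1 : q < 1)
    (hq : 9 * q ^ 2 ≤ (1 - 2 * α) * (1 - q) * (1 + 2 * α - 2 * q)) : 2 * q ≤ (1 - q) ^ 2 := by
  have hcube : 9 * q ^ 2 ≤ (1 - q) ^ 3 := by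
    nlinarith [mul_nonneg (sub_nonneg.2 hq1.le) (sq_nonneg (2 * α - q))]
  have : q ≤ 1 / 4 := by
    by_contra! hlt
    nlinarith [pow_le_pow_left₀ (sub_nonneg.2 hq1.le) (by linarith : 1 - q ≤ 3 / 4) 3]
  nlinarith

namespace IsSpheroidalSolution

variable {α χ q : ℝ} {ψ ψ' : ℝ → ℝ}

theorem initial_energy_le (h : IsSpheroidalSolution α χ q ψ ψ') (hα : 0 ≤ α)
    (hχ : 0 < χ) (hq0 : 0 ≤ q) (hq1 : q < 1) (hq : 2 * q ≤ (1 - q) ^ 2)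
    (hψ : ContinuousOn ψ (Set.Icc (-1) 1)) (hψ' : ContinuousOn ψ' (Set.Icc (-1) 1))
    (hnorm : gegenbauerIntegral α (fun x => ψ x ^ 2) = 1) :
    ψ 0 ^ 2 + ψ' 0 ^ 2 / χ ≤ 1 + α := by
  have hA0 : 0 ≤ ψ 0 ^ 2 + ψ' 0 ^ 2 / χ := by positivity
  rw [← sturmEnergy_zero (q := q)] at hA0 ⊢
  have hI₂ : 0 ≤ gegenbauerIntegral α (fun x => x ^ 2) :=
    gegenbauerIntegral_nonneg fun x _ => sq_nonneg x
  have hM₂ : 0 ≤ gegenbauerIntegral α (fun x => x ^ 2 * ψ x ^ 2) :=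
    gegenbauerIntegral_nonneg fun x _ => by positivity
  have hexcess := h.energy_excess_eq hα hχ.ne' hq1 hψ hψ' (sturmEnergy χ q ψ ψ' 0)
  have hmoment := h.mul_second_moment_le hα hχ hq0 hq1 hψ hψ'
  have hkinetic := h.second_kinetic_moment_eq hα hψ hψ'
  have hgrowth := h.mul_second_kinetic_moment_le hα hχ hq0 hq1 hψ hψ'
  have hmean : 0 ≤ gegenbauerIntegral α
      (fun x => (1 - q * x ^ 2) * (sturmEnergy χ q ψ ψ' x - sturmEnergy χ q ψ ψ' 0)) :=
    (mul_nonneg (sub_nonneg.2 hq1.le) (mul_nonneg (by positivity)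
      (gegenbauerIntegral_nonneg fun x hx => by
        have : 0 ≤ 1 - x ^ 2 := by nlinarith [hx.1, hx.2]
        positivity))).trans hgrowth
  rw [hnorm] at hexcess hkinetic
  rw [hexcess] at hmean hgrowth
  have hmass := mul_mass_le_two (by linarith : q < 2 * α + 3) hq0 hq1.le hq hA0 hI₂ hM₂
    (gegenbauerIntegral_one_eq hα) (fun hm => ?_) (sub_nonneg.1 hmean) hgrowth
  · have hlower := mul_le_mul_of_nonneg_left (two_div_le_gegenbauerIntegral_one hα) hA0
    rw [mul_div_assoc', div_le_iff₀ (by linarith)] at hlower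
    nlinarith
  · have : gegenbauerIntegral α (fun x => x ^ 2 * ((1 - q * x ^ 2) * ψ x ^ 2)) ≤
        1 / χ * gegenbauerIntegral α (fun x => x ^ 2 * ((1 - x ^ 2) * ψ' x ^ 2)) := by
      rw [one_div, ← div_eq_inv_mul, le_div_iff₀ hχ]
      linarith
    linarith

end IsSpheroidalSolution

theorem gpswf_local_estimate_general {α χ q : ℝ} {ψ ψ' : ℝ → ℝ}
    (h : IsSpheroidalSolution α χ q ψ ψ') (hψ : ContinuousOn ψ (Set.Icc (-1) 1))
    (hψ' : ContinuousOn ψ' (Set.Icc (-1) 1)) (hα : 0 ≤ α) (hχ : 0 < χ) (hq0 : 0 ≤ q) (hq1 : q < 1)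
    (hq : 9 * q ^ 2 ≤ (1 - 2 * α) * (1 - q) * (1 + 2 * α - 2 * q))
    (hnorm : (∫ x in (-1 : ℝ)..1, ψ x ^ 2 * (1 - x ^ 2) ^ α) = 1) :
    (∀ x ∈ Set.Icc (0 : ℝ) 1,
      √((1 - x ^ 2) * (1 - q * x ^ 2)) * (1 - x ^ 2) ^ α * ψ x ^ 2 ≤ ψ 0 ^ 2 + ψ' 0 ^ 2 / χ) ∧
    ψ 0 ^ 2 + ψ' 0 ^ 2 / χ ≤ 1 + α :=
  ⟨fun _ hx => h.amplitude_mul_sq_le (by linarith) hχ hq0 hq1 hq hx,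
    h.initial_energy_le hα hχ hq0 hq1 (two_mul_le_sq_of_nine_mul_sq_le hq0 hq1 hq) hψ hψ' hnorm⟩

lemma nine_mul_sq_le_of_le {α q : ℝ} (hα0 : 0 ≤ α) (hα1 : α ≤ 1 / 4) (hq0 : 0 ≤ q)
    (hq1 : q ≤ 3 / 17) : 9 * q ^ 2 ≤ (1 - 2 * α) * (1 - q) * (1 + 2 * α - 2 * q) := by
  have hα : 3 / 4 - q ≤ (1 - 2 * α) * (1 + 2 * α - 2 * q) := by
    have := mul_nonneg (by linarith : 0 ≤ 1 / 2 - 2 * α) (by linarith : 0 ≤ 1 / 2 + 2 * α - 2 * q)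
    linarith
  calc 9 * q ^ 2 ≤ (1 - q) * (3 / 4 - q) := by nlinarith
    _ ≤ (1 - q) * ((1 - 2 * α) * (1 + 2 * α - 2 * q)) := by gcongr; linarith
    _ = _ := by ring

lemma isSpheroidalSolution_of_contDiff {c α χ : ℝ} (hχ : χ ≠ 0) {ψ : ℝ → ℝ}
    (hsmooth : ContDiff ℝ 2 ψ)
    (heig : ∀ x ∈ Set.Ioo (-1 : ℝ) 1,
      -(1 - x ^ 2) * deriv (deriv ψ) x + 2 * (α + 1) * x * deriv ψ x +
        c ^ 2 * x ^ 2 * ψ x = χ * ψ x) :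
    IsSpheroidalSolution α χ (c ^ 2 / χ) ψ (deriv ψ) where
  hasDerivAt x _ := (hsmooth.differentiable (by norm_num) x).hasDerivAt
  hasDerivAt_deriv x hx := (hsmooth.differentiable_deriv_two x).hasDerivAt.congr_deriv <| by
    have hcq : c ^ 2 = χ * (c ^ 2 / χ) := by field_simp
    rw [eq_div_iff (one_sub_sq_pos hx).ne']
    linear_combination x ^ 2 * ψ x * hcq - heig x hx

/-- Local estimate for GPSWFs: let `ψ = ψ_{n,c}^{(α)}` be the `L²(I,ω_α)`-normalized smooth
eigenfunction of `L_c^{(α)} f = -(1-x²)f'' + 2(α+1)x f' + c²x² f` with eigenvalue `χ > 0`, with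
`0 ≤ α ≤ 1/4`, `c > 0` and `q = c²/χ < 3/17`. Then for every `x ∈ [0,1]`,
`√((1-x²)(1-qx²)) (1-x²)^α ψ(x)² ≤ ψ(0)² + ψ'(0)²/χ ≤ 2α+1`. -/
theorem gpswf_local_estimate (c α χ : ℝ) (hc : 0 < c) (hα0 : 0 ≤ α) (hα1 : α ≤ 1/4)
    (hχ : 0 < χ) (hq : c ^ 2 / χ < 3/17)
    (ψ : ℝ → ℝ) (hsmooth : ContDiff ℝ 2 ψ)
    (heig : ∀ x ∈ Set.Ioo (-1 : ℝ) 1,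
      -(1 - x ^ 2) * deriv (deriv ψ) x + 2 * (α + 1) * x * deriv ψ x +
        c ^ 2 * x ^ 2 * ψ x = χ * ψ x)
    (hnorm : (∫ x in (-1 : ℝ)..1, (ψ x) ^ 2 * (1 - x ^ 2) ^ α) = 1) :
    (∀ x ∈ Set.Icc (0 : ℝ) 1,
      Real.sqrt ((1 - x ^ 2) * (1 - (c ^ 2 / χ) * x ^ 2)) * (1 - x ^ 2) ^ α * (ψ x) ^ 2
        ≤ (ψ 0) ^ 2 + (deriv ψ 0) ^ 2 / χ) ∧
    (ψ 0) ^ 2 + (deriv ψ 0) ^ 2 / χ ≤ 2 * α + 1 := by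
  have hq0 : 0 ≤ c ^ 2 / χ := by positivity
  exact (gpswf_local_estimate_general (isSpheroidalSolution_of_contDiff hχ.ne' hsmooth heig)
    hsmooth.continuous.continuousOn (hsmooth.continuous_deriv (by norm_num)).continuousOn hα0 hχ hq0
    (by linarith) (nine_mul_sq_le_of_le hα0 hα1 hq0 hq.le) hnorm).imp_right (·.trans (by linarith))
end
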